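/- arXiv:2410.08004 — 2 statements merged into one kernel-verified Lean document; each statement's English description precedes it below -/
import Mathlib

section
/- Let h > 0 and β > 0 be arbitrary, and let m^+ ∈ (0,1) be the largest solution of z = tanh(βz + h). Set r² = β(1−(m^+)²)² / (4 − 4β(1−(m^+)²)). Fix 0 < δ < 1/6, let ξ̃ be a real random variable with the Gaussian density of mean 0 and variance r², set ξ_N = ξ̃ 1{|ξ̃| ≤ N^δ}, and define ν_N(σ) = E[∏_{i=1}^N ((1 + σ_i m^+)/2 + σ_i ξ_N/√N)] for σ ∈ {−1,+1}^N. Then H(μ_N | ν_N) → 0 and H(ν_N | μ_N) → 0 as N → ∞. -/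
open Filter Real MeasureTheory

/-- Relative entropy (Kullback–Leibler divergence) between two probability mass
functions on a finite set. -/
noncomputable def relEnt {α : Type*} [Fintype α] (rho pion : α → ℝ) : ℝ :=
  ∑ x, rho x * Real.log (rho x / pion x)

/-!
Completing the square at `m = tanh (β m + h)` shows that `μ_N` is the law of independent spins of
mean `m` reweighted by `exp (β W ^ 2 / 2)`, where `W` is the rescaled magnetization around `m`,
while `ν_N` is a mixture of laws of independent spins of mean `m + 2 t / √N`. To second order, the
density of such a law with respect to the one of mean `m` is `exp (2 (W t - t ^ 2) / (1 - m ^ 2))`,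
and `r ^ 2` is chosen so that averaging this over a Gaussian `t` gives a constant multiple of
`exp (β W ^ 2 / 2)`. Hence `log (μ_N / ν_N)` is nearly constant where `|W|` is at most the
truncation level. The value of that constant is never needed, because the sum of the two relative
entropies, `∑ (μ_N - ν_N) log (μ_N / ν_N)`, is unchanged when a constant is added to the logarithm.
Elsewhere `log (μ_N / ν_N)` deviates from that constant by `O(N)`, and both laws have negligible
mass there, since a spin of mean `m` is sub-Gaussian with a variance proxy below `1 / β`.
-/

theorem hasDerivAt_tanh (x : ℝ) : HasDerivAt tanh (1 - tanh x ^ 2) x := by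
  have hfun : tanh = sinh / cosh := funext tanh_eq_sinh_div_cosh
  rw [tanh_eq_sinh_div_cosh, hfun]
  refine ((hasDerivAt_sinh x).div (hasDerivAt_cosh x) (cosh_pos x).ne').congr_deriv ?_
  field_simp

theorem deriv_tanh : deriv tanh = fun x ↦ 1 - tanh x ^ 2 :=
  funext fun x ↦ (hasDerivAt_tanh x).deriv

theorem differentiable_tanh : Differentiable ℝ tanh :=
  fun x ↦ (hasDerivAt_tanh x).differentiableAt

theorem monotone_tanh : Monotone tanh :=
  monotone_of_deriv_nonneg differentiable_tanh fun x ↦ by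
    rw [deriv_tanh, sub_nonneg]
    exact (tanh_sq_lt_one x).le

theorem tanh_nonneg {x : ℝ} (hx : 0 ≤ x) : 0 ≤ tanh x :=
  tanh_zero ▸ monotone_tanh hx

theorem concaveOn_tanh : ConcaveOn ℝ (Set.Ici 0) tanh := by
  refine AntitoneOn.concaveOn_of_deriv (convex_Ici 0) differentiable_tanh.continuous.continuousOn
    differentiable_tanh.differentiableOn ?_
  rw [deriv_tanh, interior_Ici]
  intro x hx y _ hxy
  have h0 : 0 ≤ tanh x := tanh_nonneg (le_of_lt hx)
  have hmono : tanh x ≤ tanh y := monotone_tanh hxy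
  dsimp only
  gcongr

theorem antitoneOn_tanh_div_id : AntitoneOn (fun u ↦ tanh u / u) (Set.Ioi 0) := by
  have h := concaveOn_tanh.antitoneOn_slope_gt (x := 0) Set.self_mem_Ici
  refine fun u hu v hv huv ↦ ?_
  simpa [slope_def_field] using
    h ⟨(Set.mem_Ioi.1 hu).le, hu⟩ ⟨(Set.mem_Ioi.1 hv).le, hv⟩ huv

theorem tanh_abs_div_abs (θ : ℝ) : tanh |θ| / |θ| = tanh θ / θ := by
  rcases abs_choice θ with h | h <;> simp only [h, tanh_neg, neg_div_neg_eq]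

theorem one_sub_tanh_sq_le_tanh_div {θ : ℝ} (hθ : θ ≠ 0) : 1 - tanh θ ^ 2 ≤ tanh θ / θ := by
  have habs : tanh |θ| ^ 2 = tanh θ ^ 2 := by
    rcases abs_choice θ with h | h <;> simp only [h, tanh_neg, neg_sq]
  have h := concaveOn_tanh.le_slope_of_hasDerivAt Set.self_mem_Ici (abs_nonneg θ)
    (abs_pos.2 hθ) (hasDerivAt_tanh |θ|)
  rwa [slope_def_field, tanh_zero, sub_zero, sub_zero, tanh_abs_div_abs, habs] at h

theorem tanh_div_le_one {θ : ℝ} (hθ : θ ≠ 0) : tanh θ / θ ≤ 1 := by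
  have h := concaveOn_tanh.slope_le_of_hasDerivAt Set.self_mem_Ici (abs_nonneg θ)
    (abs_pos.2 hθ) (hasDerivAt_tanh 0)
  rw [slope_def_field, tanh_zero, sub_zero, sub_zero, tanh_abs_div_abs] at h
  simpa using h

theorem hasDerivAt_log_cosh_sub_sq (c x : ℝ) :
    HasDerivAt (fun u ↦ log (cosh u) - c * u ^ 2 / 2) (tanh x - c * x) x := by
  refine (((hasDerivAt_cosh x).log (cosh_pos x).ne').sub
    (((hasDerivAt_pow 2 x).const_mul c).div_const 2)).congr_deriv ?_
  rw [tanh_eq_sinh_div_cosh]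
  ring

/-- The bound is attained at `u = ±θ`, where the two sides are tangent. -/
theorem log_cosh_le {θ : ℝ} (hθ : θ ≠ 0) (u : ℝ) :
    log (cosh u) ≤ log (cosh θ) + tanh θ / θ * (u ^ 2 - θ ^ 2) / 2 := by
  wlog hpos : 0 < θ generalizing θ
  · simpa [neg_div_neg_eq] using
      this (neg_ne_zero.2 hθ) (neg_pos.2 (lt_of_le_of_ne (not_lt.1 hpos) hθ))
  let F : ℝ → ℝ := fun u ↦ log (cosh u) - tanh θ / θ * u ^ 2 / 2
  have hF (x : ℝ) : HasDerivAt F (tanh x - tanh θ / θ * x) x := hasDerivAt_log_cosh_sub_sq _ x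
  have hdiff : Differentiable ℝ F := fun x ↦ (hF x).differentiableAt
  have hmono : MonotoneOn F (Set.Icc 0 θ) := by
    refine monotoneOn_of_deriv_nonneg (convex_Icc 0 θ) hdiff.continuous.continuousOn
      hdiff.differentiableOn fun x hx ↦ ?_
    rw [interior_Icc] at hx
    rw [(hF x).deriv, sub_nonneg, ← le_div_iff₀ hx.1]
    exact antitoneOn_tanh_div_id hx.1 hpos hx.2.le
  have hanti : AntitoneOn F (Set.Ici θ) := by
    refine antitoneOn_of_deriv_nonpos (convex_Ici θ) hdiff.continuous.continuousOn
      hdiff.differentiableOn fun x hx ↦ ?_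
    rw [interior_Ici] at hx
    have hx0 : 0 < x := hpos.trans hx
    rw [(hF x).deriv, sub_nonpos, ← div_le_iff₀ hx0]
    exact antitoneOn_tanh_div_id hpos hx0 (le_of_lt hx)
  have hmax : F |u| ≤ F θ := by
    rcases le_total |u| θ with h | h
    · exact hmono ⟨abs_nonneg u, h⟩ ⟨hpos.le, le_rfl⟩ h
    · exact hanti Set.self_mem_Ici h h
  simp only [F, cosh_abs, sq_abs] at hmax
  linarith

section RelativeEntropy

variable {α : Type*} [Fintype α] {p q : α → ℝ}

theorem log_div_swap (x y : ℝ) : log (x / y) = -log (y / x) := by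
  rw [← log_inv, inv_div]

theorem relEnt_nonneg (hp : ∀ x, 0 < p x) (hq : ∀ x, 0 < q x) (hsum : ∑ x, p x = ∑ x, q x) :
    0 ≤ relEnt p q := by
  calc (0 : ℝ) = ∑ x, (p x - q x) := by rw [Finset.sum_sub_distrib, hsum, sub_self]
    _ ≤ relEnt p q := Finset.sum_le_sum fun x _ ↦ by
      have h := one_sub_inv_le_log_of_pos (div_pos (hp x) (hq x))
      have hpx := mul_le_mul_of_nonneg_left h (hp x).le
      rwa [inv_div, mul_sub, mul_one, mul_div_cancel₀ _ (hp x).ne'] at hpx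

theorem relEnt_add_relEnt_swap (hsum : ∑ x, p x = ∑ x, q x) (l : ℝ) :
    relEnt p q + relEnt q p = ∑ x, (p x - q x) * (log (p x / q x) - l) := by
  have hl : ∑ x, (p x - q x) * l = 0 := by
    rw [← Finset.sum_mul, Finset.sum_sub_distrib, hsum, sub_self, zero_mul]
  simp only [relEnt, mul_sub, Finset.sum_sub_distrib, hl, sub_zero]
  rw [← Finset.sum_add_distrib]
  refine Finset.sum_congr rfl fun x _ ↦ ?_
  rw [log_div_swap (q x)]
  ring

/-- No value of `l` enters the bound, so `p` and `q` need only be known up to constants. -/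
theorem relEnt_add_relEnt_swap_le [DecidableEq α] (hp : ∀ x, 0 ≤ p x) (hq : ∀ x, 0 ≤ q x)
    (hp1 : ∑ x, p x = 1) (hq1 : ∑ x, q x = 1) {T : Finset α} {l ε K : ℝ} (hε : 0 ≤ ε)
    (hT : ∀ x ∈ T, |log (p x / q x) - l| ≤ ε) (hK : ∀ x ∉ T, |log (p x / q x) - l| ≤ K) :
    relEnt p q + relEnt q p ≤ 2 * ε + K * (∑ x ∈ Tᶜ, p x + ∑ x ∈ Tᶜ, q x) := by
  have hterm (x : α) : (p x - q x) * (log (p x / q x) - l) ≤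
      (p x + q x) * |log (p x / q x) - l| := by
    have hpq : |p x - q x| ≤ p x + q x :=
      abs_sub_le_iff.2 ⟨by linarith [hq x], by linarith [hp x]⟩
    calc _ ≤ |p x - q x| * |log (p x / q x) - l| := by rw [← abs_mul]; exact le_abs_self _
      _ ≤ _ := by gcongr
  have htypical : ∑ x ∈ T, (p x + q x) * |log (p x / q x) - l| ≤ 2 * ε := by
    calc _ ≤ ∑ x ∈ T, (p x + q x) * ε := Finset.sum_le_sum fun x hx ↦
          mul_le_mul_of_nonneg_left (hT x hx) (add_nonneg (hp x) (hq x))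
      _ ≤ ∑ x, (p x + q x) * ε := Finset.sum_le_univ_sum_of_nonneg fun x ↦
          mul_nonneg (add_nonneg (hp x) (hq x)) hε
      _ = 2 * ε := by rw [← Finset.sum_mul, Finset.sum_add_distrib, hp1, hq1]; norm_num
  have hatypical : ∑ x ∈ Tᶜ, (p x + q x) * |log (p x / q x) - l| ≤
      K * (∑ x ∈ Tᶜ, p x + ∑ x ∈ Tᶜ, q x) := by
    rw [← Finset.sum_add_distrib, mul_comm, Finset.sum_mul]
    exact Finset.sum_le_sum fun x hx ↦ mul_le_mul_of_nonneg_left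
      (hK x (Finset.mem_compl.1 hx)) (add_nonneg (hp x) (hq x))
  rw [relEnt_add_relEnt_swap (hp1.trans hq1.symm) l]
  refine (Finset.sum_le_sum fun x _ ↦ hterm x).trans ?_
  rw [← Finset.sum_add_sum_compl T]
  exact add_le_add htypical hatypical

theorem sum_le_exp_neg_mul_sum_exp {w g : α → ℝ} (hw : ∀ x, 0 ≤ w x) {T : Finset α} {t : ℝ}
    (ht : ∀ x ∈ T, t ≤ g x) : ∑ x ∈ T, w x ≤ exp (-t) * ∑ x, w x * exp (g x) := by
  calc ∑ x ∈ T, w x ≤ ∑ x ∈ T, exp (-t) * (w x * exp (g x)) := Finset.sum_le_sum fun x hx ↦ by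
        rw [mul_left_comm, ← exp_add]
        exact le_mul_of_one_le_right (hw x) (one_le_exp (by linarith [ht x hx]))
    _ ≤ ∑ x, exp (-t) * (w x * exp (g x)) := Finset.sum_le_univ_sum_of_nonneg fun x ↦
        mul_nonneg (exp_pos _).le (mul_nonneg (hw x) (exp_pos _).le)
    _ = exp (-t) * ∑ x, w x * exp (g x) := (Finset.mul_sum ..).symm

end RelativeEntropy

section SingleSpin

/-- The value `±1` of a spin encoded by a Boolean. -/
noncomputable def spinSign (b : Bool) : ℝ := if b then 1 else -1

/-- The law on `{±1}` of mean `m`; it is a probability for `|m| ≤ 1`. -/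
noncomputable def spinWeight (m : ℝ) (b : Bool) : ℝ := (1 + spinSign b * m) / 2

/-- A centred spin of mean `m` is sub-Gaussian with variance proxy `v`. -/
def IsSubgaussianSpin (m v : ℝ) : Prop :=
  ∀ x : ℝ, ∑ b, spinWeight m b * exp (x * (spinSign b - m)) ≤ exp (v * x ^ 2 / 2)

theorem spinSign_sq (b : Bool) : spinSign b ^ 2 = 1 := by cases b <;> simp [spinSign]

theorem abs_spinSign (b : Bool) : |spinSign b| = 1 := by cases b <;> simp [spinSign]

variable {m : ℝ}

theorem abs_spinSign_sub_le (hm : |m| < 1) (b : Bool) : |spinSign b - m| ≤ 2 := by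
  linarith [abs_sub (spinSign b) m, abs_spinSign b]

theorem one_sub_sq_pos (hm : |m| < 1) : 0 < 1 - m ^ 2 :=
  sub_pos.2 (sq_lt_one_iff_abs_lt_one m |>.2 hm)

theorem spinWeight_pos (hm : |m| < 1) (b : Bool) : 0 < spinWeight m b := by
  have h : |spinSign b * m| < 1 := by rwa [abs_mul, abs_spinSign, one_mul]
  have := (abs_lt.1 h).1
  exact div_pos (by linarith) two_pos

theorem sum_spinWeight (m : ℝ) : ∑ b, spinWeight m b = 1 := by
  simp only [Fintype.sum_bool, spinWeight, spinSign, if_true, Bool.false_eq_true, if_false]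
  ring

theorem spinWeight_add (hm : |m| < 1) (η : ℝ) (b : Bool) :
    spinWeight (m + η) b = spinWeight m b * (1 + η * (spinSign b - m) / (1 - m ^ 2)) := by
  have ha := (one_sub_sq_pos hm).ne'
  simp only [spinWeight]
  field_simp
  linear_combination (-m * η) * spinSign_sq b

theorem spinWeight_tanh (θ : ℝ) (b : Bool) :
    spinWeight (tanh θ) b = exp (θ * spinSign b) / (2 * cosh θ) := by
  have hexp : exp (θ * spinSign b) = cosh θ + spinSign b * sinh θ := by
    cases b <;> simp [spinSign, cosh_add_sinh, ← cosh_sub_sinh, sub_eq_add_neg]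
  rw [spinWeight, tanh_eq_sinh_div_cosh, hexp]
  field_simp

theorem sum_spinWeight_tanh_mul_exp (θ x : ℝ) :
    ∑ b, spinWeight (tanh θ) b * exp (x * (spinSign b - tanh θ)) =
      exp (log (cosh (θ + x)) - log (cosh θ) - x * tanh θ) := by
  rw [exp_sub, exp_sub, exp_log (cosh_pos _), exp_log (cosh_pos _), cosh_eq (θ + x)]
  simp only [Fintype.sum_bool, spinWeight_tanh, spinSign, if_true, Bool.false_eq_true, if_false,
    mul_sub, exp_sub, mul_one, mul_neg, neg_add, exp_add]
  field_simp

theorem isSubgaussianSpin_tanh {θ : ℝ} (hθ : θ ≠ 0) :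
    IsSubgaussianSpin (tanh θ) (tanh θ / θ) := by
  intro x
  have hquad : tanh θ / θ * ((θ + x) ^ 2 - θ ^ 2) / 2 =
      x * tanh θ + tanh θ / θ * x ^ 2 / 2 := by
    field_simp
    ring
  rw [sum_spinWeight_tanh_mul_exp, exp_le_exp]
  linarith [log_cosh_le hθ (θ + x)]

theorem IsSubgaussianSpin.mono {v w : ℝ} (h : IsSubgaussianSpin m v) (hvw : v ≤ w) :
    IsSubgaussianSpin m w :=
  fun x ↦ (h x).trans (exp_le_exp.2 (by gcongr))

theorem isSubgaussianSpin_zero_one : IsSubgaussianSpin 0 1 := by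
  intro x
  have hcosh := cosh_le_exp_half_sq x
  have hsum := sum_spinWeight_tanh_mul_exp 0 x
  rw [tanh_zero, cosh_zero, log_one, zero_add, mul_zero, sub_zero, sub_zero,
    exp_log (cosh_pos x)] at hsum
  rwa [hsum, one_mul]

theorem isSubgaussianSpin_one (hm : |m| < 1) : IsSubgaussianSpin m 1 := by
  obtain rfl | hm0 := eq_or_ne m 0
  · exact isSubgaussianSpin_zero_one
  have htanh : tanh (artanh m) = m := tanh_artanh (abs_lt.1 hm)
  have hθ : artanh m ≠ 0 := fun h ↦ hm0 (by rw [← htanh, h, tanh_zero])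
  simpa only [htanh] using (isSubgaussianSpin_tanh hθ).mono (tanh_div_le_one hθ)

/-- For `h ≠ 0` the proxy is `m / θ` with `θ = β m + h`, which lies below `1 / β` because
`|β m| < |θ|`. -/
theorem exists_isSubgaussianSpin {β h : ℝ} (hβ : 0 < β) (hm : m = tanh (β * m + h))
    (hphase : h ≠ 0 ∨ β < 1) (hsign : 0 ≤ h * m) :
    ∃ v, IsSubgaussianSpin m v ∧ 1 - m ^ 2 ≤ v ∧ β * v < 1 := by
  generalize hθ : β * m + h = θ at hm
  obtain rfl | hθ0 := eq_or_ne θ 0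
  · rw [tanh_zero] at hm
    have hh : h = 0 := by simpa [hm] using hθ
    refine ⟨1, hm ▸ isSubgaussianSpin_zero_one, by simp [hm], ?_⟩
    rw [mul_one]
    exact hphase.resolve_left (not_not.2 hh)
  refine ⟨tanh θ / θ, hm ▸ isSubgaussianSpin_tanh hθ0, hm ▸ one_sub_tanh_sq_le_tanh_div hθ0, ?_⟩
  obtain rfl | hh := eq_or_ne h 0
  · calc β * (tanh θ / θ) ≤ β * 1 := by gcongr; exact tanh_div_le_one hθ0
      _ < 1 := by simpa using hphase
  · have hθh : 0 < h * θ := by rw [← hθ]; nlinarith [mul_nonneg hβ.le hsign, sq_pos_of_ne_zero hh]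
    have hdiv : 1 - β * (tanh θ / θ) = h * θ / θ ^ 2 := by
      rw [← hm]
      field_simp
      linear_combination -hθ
    have : 0 < h * θ / θ ^ 2 := by positivity
    linarith

end SingleSpin

section ProductLaw

variable {m v β h : ℝ} {N : ℕ}

/-- The law of `N` independent spins of mean `m`. -/
noncomputable def productLaw (m : ℝ) (σ : Fin N → Bool) : ℝ := ∏ i, spinWeight m (σ i)

/-- The rescaled magnetization around `m`, written `W` in the comments. -/
noncomputable def fluctuation (m : ℝ) (σ : Fin N → Bool) : ℝ := (∑ i, (spinSign (σ i) - m)) / √N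

/-- The normalizing constant of `tiltedLaw`. -/
noncomputable def tiltNormalizer (β m : ℝ) (N : ℕ) : ℝ :=
  ∑ σ : Fin N → Bool, productLaw m σ * exp (β * fluctuation m σ ^ 2 / 2)

/-- The product law of mean `m` reweighted by `exp (β W ^ 2 / 2)`. -/
noncomputable def tiltedLaw (β m : ℝ) (σ : Fin N → Bool) : ℝ :=
  productLaw m σ * exp (β * fluctuation m σ ^ 2 / 2) / tiltNormalizer β m N

/-- The unnormalized Curie–Weiss Gibbs weight. -/
noncomputable def gibbsWeight (β h : ℝ) (σ : Fin N → Bool) : ℝ :=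
  exp (β / (2 * N) * (∑ i, ∑ j, spinSign (σ i) * spinSign (σ j)) + h * ∑ i, spinSign (σ i))

theorem productLaw_pos (hm : |m| < 1) (σ : Fin N → Bool) : 0 < productLaw m σ :=
  Finset.prod_pos fun _ _ ↦ spinWeight_pos hm _

theorem sum_productLaw_mul_prod (m : ℝ) (N : ℕ) (f : Bool → ℝ) :
    ∑ σ : Fin N → Bool, productLaw m σ * ∏ i, f (σ i) = (∑ b, spinWeight m b * f b) ^ N := by
  simp only [productLaw, ← Finset.prod_mul_distrib]
  exact (Fintype.sum_pow (fun b ↦ spinWeight m b * f b) N).symm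

theorem sum_productLaw (m : ℝ) (N : ℕ) : ∑ σ : Fin N → Bool, productLaw m σ = 1 := by
  have h := sum_productLaw_mul_prod m N fun _ ↦ 1
  simpa only [Finset.prod_const_one, mul_one, sum_spinWeight, one_pow] using h

theorem abs_fluctuation_le (hm : |m| < 1) (σ : Fin N → Bool) : |fluctuation m σ| ≤ 2 * √N := by
  have hsum : |∑ i, (spinSign (σ i) - m)| ≤ 2 * N :=
    calc _ ≤ ∑ i, |spinSign (σ i) - m| := Finset.abs_sum_le_sum_abs _ _
      _ ≤ ∑ _i : Fin N, (2 : ℝ) := Finset.sum_le_sum fun i _ ↦ abs_spinSign_sub_le hm _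
      _ = 2 * N := by simp [mul_comm]
  rw [fluctuation, abs_div, abs_of_nonneg (sqrt_nonneg _)]
  refine div_le_of_le_mul₀ (sqrt_nonneg _) (by positivity) ?_
  rwa [mul_assoc, mul_self_sqrt N.cast_nonneg]

theorem fluctuation_sq_le (hm : |m| < 1) (σ : Fin N → Bool) : fluctuation m σ ^ 2 ≤ 4 * N := by
  have h := pow_le_pow_left₀ (abs_nonneg _) (abs_fluctuation_le hm σ) 2
  rw [sq_abs, mul_pow, sq_sqrt N.cast_nonneg] at h
  linarith

theorem exists_fluctuation_eq (m : ℝ) (σ : Fin N → Bool) :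
    ∃ k ∈ Finset.range (N + 1), fluctuation m σ = (2 * k - N - N * m) / √N := by
  refine ⟨(Finset.univ.filter fun i ↦ σ i = true).card, ?_, ?_⟩
  · rw [Finset.mem_range, Nat.lt_succ_iff]
    exact (Finset.card_filter_le _ _).trans (by simp)
  · have hspin (b : Bool) : spinSign b - m = 2 * (if b = true then (1 : ℝ) else 0) - (1 + m) := by
      cases b <;> simp only [spinSign, if_true, Bool.false_eq_true, if_false] <;> ring
    simp only [fluctuation, hspin, Finset.sum_sub_distrib, ← Finset.mul_sum, Finset.sum_boole,
      Finset.sum_const, Finset.card_univ, Fintype.card_fin, nsmul_eq_mul]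
    ring

theorem sum_productLaw_mul_exp_le (hm : |m| < 1) (hv : IsSubgaussianSpin m v) (hN : 0 < N)
    (x : ℝ) :
    ∑ σ : Fin N → Bool, productLaw m σ * exp (x * fluctuation m σ) ≤ exp (v * x ^ 2 / 2) := by
  have hprod (σ : Fin N → Bool) :
      exp (x * fluctuation m σ) = ∏ i, exp (x / √N * (spinSign (σ i) - m)) := by
    rw [← exp_sum, ← Finset.mul_sum, fluctuation, mul_div_assoc', div_mul_eq_mul_div]
  simp only [hprod, sum_productLaw_mul_prod m N fun b ↦ exp (x / √N * (spinSign b - m))]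
  calc _ ≤ exp (v * (x / √N) ^ 2 / 2) ^ N :=
        pow_le_pow_left₀ (Finset.sum_nonneg fun b _ ↦
          mul_nonneg (spinWeight_pos hm b).le (exp_pos _).le) (hv _) N
    _ = exp (v * x ^ 2 / 2) := by
        rw [← exp_nat_mul, div_pow, sq_sqrt N.cast_nonneg]
        field_simp

/-- Bound `exp (W ^ 2 / (2 v))` by the sum of `exp ((w W - w ^ 2 / 2) / v)` over the `N + 1`
possible values `w` of `W`; each of these has mean at most `1`. -/
theorem sum_productLaw_mul_exp_sq_le (hm : |m| < 1) (hv : IsSubgaussianSpin m v) (hv0 : 0 < v)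
    (hN : 0 < N) :
    ∑ σ : Fin N → Bool, productLaw m σ * exp (fluctuation m σ ^ 2 / (2 * v)) ≤ N + 1 := by
  let w (k : ℕ) : ℝ := (2 * k - N - N * m) / √N
  let f (σ : Fin N → Bool) (k : ℕ) : ℝ :=
    exp (w k / v * fluctuation m σ) * exp (-(w k ^ 2 / (2 * v)))
  have hpointwise (σ : Fin N → Bool) :
      exp (fluctuation m σ ^ 2 / (2 * v)) ≤ ∑ k ∈ Finset.range (N + 1), f σ k := by
    obtain ⟨k, hk, hkw⟩ := exists_fluctuation_eq m σ
    have hfk : exp (fluctuation m σ ^ 2 / (2 * v)) = f σ k := by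
      simp only [f, w, ← hkw, ← exp_add]
      ring_nf
    exact hfk.trans_le (Finset.single_le_sum (fun j _ ↦ by positivity) hk)
  have hmean (k : ℕ) : ∑ σ : Fin N → Bool, productLaw m σ * f σ k ≤ 1 := by
    simp only [f, ← mul_assoc, ← Finset.sum_mul]
    calc _ ≤ exp (v * (w k / v) ^ 2 / 2) * exp (-(w k ^ 2 / (2 * v))) := by
          gcongr
          exact sum_productLaw_mul_exp_le hm hv hN _
      _ = 1 := by
          rw [← exp_add, exp_eq_one_iff]
          field_simp
          ring
  calc _ ≤ ∑ σ : Fin N → Bool, productLaw m σ * ∑ k ∈ Finset.range (N + 1), f σ k :=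
        Finset.sum_le_sum fun σ _ ↦
          mul_le_mul_of_nonneg_left (hpointwise σ) (productLaw_pos hm σ).le
    _ = ∑ k ∈ Finset.range (N + 1), ∑ σ : Fin N → Bool, productLaw m σ * f σ k := by
        simp only [Finset.mul_sum]
        exact Finset.sum_comm
    _ ≤ ∑ _k ∈ Finset.range (N + 1), (1 : ℝ) := Finset.sum_le_sum fun k _ ↦ hmean k
    _ = N + 1 := by simp

/-- The square is completed around `m`; the mean-field equation cancels the linear term. -/
theorem gibbsWeight_eq (hm : m = tanh (β * m + h)) (hN : 0 < N) (σ : Fin N → Bool) :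
    gibbsWeight β h σ = (2 * cosh (β * m + h)) ^ N * exp (-(β * N * m ^ 2 / 2)) *
      (productLaw m σ * exp (β * fluctuation m σ ^ 2 / 2)) := by
  have hsq : ∑ i, ∑ j, spinSign (σ i) * spinSign (σ j) = (∑ i, spinSign (σ i)) ^ 2 := by
    rw [sq, Finset.sum_mul_sum]
  have hprod : (2 * cosh (β * m + h)) ^ N * productLaw m σ =
      exp ((β * m + h) * ∑ i, spinSign (σ i)) := by
    have hweight (b : Bool) :
        spinWeight m b = exp ((β * m + h) * spinSign b) / (2 * cosh (β * m + h)) := by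
      rw [← spinWeight_tanh, ← hm]
    simp only [productLaw, hweight, Finset.prod_div_distrib, ← exp_sum, ← Finset.mul_sum,
      Finset.prod_const, Finset.card_univ, Fintype.card_fin]
    field_simp
  have hW : fluctuation m σ ^ 2 = ((∑ i, spinSign (σ i)) - N * m) ^ 2 / N := by
    rw [fluctuation, div_pow, sq_sqrt N.cast_nonneg, Finset.sum_sub_distrib]
    simp
  rw [show ∀ A B C D : ℝ, A * B * (C * D) = A * C * (B * D) by intros; ring, hprod, gibbsWeight,
    hsq, hW, ← exp_add, ← exp_add]
  congr 1
  field_simp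
  ring

theorem gibbsWeight_div_sum_eq_tiltedLaw (hm : m = tanh (β * m + h)) (hN : 0 < N)
    (σ : Fin N → Bool) :
    gibbsWeight β h σ / ∑ σ' : Fin N → Bool, gibbsWeight β h σ' = tiltedLaw β m σ := by
  simp only [gibbsWeight_eq hm hN, ← Finset.mul_sum]
  exact mul_div_mul_left _ _ (by positivity)

theorem tiltNormalizer_pos (hm : |m| < 1) (β : ℝ) (N : ℕ) : 0 < tiltNormalizer β m N :=
  Finset.sum_pos (fun σ _ ↦ mul_pos (productLaw_pos hm σ) (exp_pos _)) Finset.univ_nonempty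

theorem one_le_tiltNormalizer (hm : |m| < 1) (hβ : 0 ≤ β) (N : ℕ) : 1 ≤ tiltNormalizer β m N := by
  rw [← sum_productLaw m N]
  exact Finset.sum_le_sum fun σ _ ↦
    le_mul_of_one_le_right (productLaw_pos hm σ).le (one_le_exp (by positivity))

theorem tiltedLaw_pos (hm : |m| < 1) (β : ℝ) (σ : Fin N → Bool) : 0 < tiltedLaw β m σ :=
  div_pos (mul_pos (productLaw_pos hm σ) (exp_pos _)) (tiltNormalizer_pos hm β N)

theorem sum_tiltedLaw (hm : |m| < 1) (β : ℝ) (N : ℕ) :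
    ∑ σ : Fin N → Bool, tiltedLaw β m σ = 1 := by
  simp only [tiltedLaw, ← Finset.sum_div]
  exact div_self (tiltNormalizer_pos hm β N).ne'

theorem log_tiltedLaw_div_productLaw (hm : |m| < 1) (β : ℝ) (σ : Fin N → Bool) :
    log (tiltedLaw β m σ / productLaw m σ) =
      β * fluctuation m σ ^ 2 / 2 - log (tiltNormalizer β m N) := by
  rw [tiltedLaw, div_right_comm, mul_div_cancel_left₀ _ (productLaw_pos hm σ).ne',
    log_div (exp_pos _).ne' (tiltNormalizer_pos hm β N).ne', log_exp]

theorem sum_tiltedLaw_le_of_le_sq (hm : |m| < 1) (hβ : 0 ≤ β) (hv : IsSubgaussianSpin m v)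
    (hv0 : 0 < v) (hβv : β * v ≤ 1) (hN : 0 < N) {T : Finset (Fin N → Bool)} {M : ℝ}
    (hT : ∀ σ ∈ T, M ≤ fluctuation m σ ^ 2) :
    ∑ σ ∈ T, tiltedLaw β m σ ≤ exp (-((1 - β * v) / (2 * v) * M)) * (N + 1) := by
  have hrate : 0 ≤ (1 - β * v) / (2 * v) := div_nonneg (by linarith) (by positivity)
  have hweight (σ : Fin N → Bool) :
      tiltedLaw β m σ * exp ((1 - β * v) / (2 * v) * fluctuation m σ ^ 2) ≤
        productLaw m σ * exp (fluctuation m σ ^ 2 / (2 * v)) := by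
    have hexp : exp (fluctuation m σ ^ 2 / (2 * v)) = exp (β * fluctuation m σ ^ 2 / 2) *
        exp ((1 - β * v) / (2 * v) * fluctuation m σ ^ 2) := by
      rw [← exp_add]
      congr 1
      field_simp
      ring
    rw [hexp, ← mul_assoc]
    gcongr
    exact div_le_self (mul_nonneg (productLaw_pos hm σ).le (exp_pos _).le)
      (one_le_tiltNormalizer hm hβ N)
  calc _ ≤ exp (-((1 - β * v) / (2 * v) * M)) * ∑ σ : Fin N → Bool, tiltedLaw β m σ *
          exp ((1 - β * v) / (2 * v) * fluctuation m σ ^ 2) :=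
        sum_le_exp_neg_mul_sum_exp (fun σ ↦ (tiltedLaw_pos hm β σ).le) fun σ hσ ↦
          mul_le_mul_of_nonneg_left (hT σ hσ) hrate
    _ ≤ _ := by
        gcongr
        exact (Finset.sum_le_sum fun σ _ ↦ hweight σ).trans
          (sum_productLaw_mul_exp_sq_le hm hv hv0 hN)

end ProductLaw

section Analysis

theorem abs_log_one_add_sub_le {x : ℝ} (hx : |x| ≤ 1 / 2) :
    |log (1 + x) - (x - x ^ 2 / 2)| ≤ 2 * |x| ^ 3 := by
  have h := abs_log_sub_add_sum_range_le (x := -x) (by rw [abs_neg]; linarith) 2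
  simp only [Finset.sum_range_succ, Finset.sum_range_zero, abs_neg, sub_neg_eq_add] at h
  have hsum : log (1 + x) - (x - x ^ 2 / 2) =
      0 + (-x) ^ (0 + 1) / (((0 : ℕ) : ℝ) + 1) + (-x) ^ (1 + 1) / (((1 : ℕ) : ℝ) + 1) +
        log (1 + x) := by
    push_cast
    ring
  rw [hsum]
  calc _ ≤ |x| ^ 3 / (1 - |x|) := h
    _ ≤ |x| ^ 3 / (1 / 2) := by
        gcongr
        linarith
    _ = 2 * |x| ^ 3 := by ring

theorem abs_sum_log_one_add_sub_le {ι : Type*} [Fintype ι] {x : ι → ℝ} {ρ : ℝ} (hρ : ρ ≤ 1 / 2)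
    (hx : ∀ i, |x i| ≤ ρ) :
    |∑ i, log (1 + x i) - (∑ i, x i - (∑ i, x i ^ 2) / 2)| ≤ Fintype.card ι * (2 * ρ ^ 3) := by
  rw [Finset.sum_div, ← Finset.sum_sub_distrib, ← Finset.sum_sub_distrib]
  calc _ ≤ ∑ i, |log (1 + x i) - (x i - x i ^ 2 / 2)| := Finset.abs_sum_le_sum_abs _ _
    _ ≤ ∑ _i : ι, 2 * ρ ^ 3 := Finset.sum_le_sum fun i _ ↦
        (abs_log_one_add_sub_le ((hx i).trans hρ)).trans (by gcongr; exact hx i)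
    _ = Fintype.card ι * (2 * ρ ^ 3) := by simp

theorem abs_log_sub_log_le {x y κ : ℝ} (hy : 0 < y) (hκ : κ ≤ 1 / 2) (hxy : |x - y| ≤ κ * y) :
    |log x - log y| ≤ 2 * κ := by
  obtain ⟨hlower, hupper⟩ := abs_le.1 hxy
  have hκ0 : 0 ≤ κ := nonneg_of_mul_nonneg_left ((abs_nonneg _).trans hxy) hy
  have hx : 0 < x := by nlinarith
  rw [← log_div hx.ne' hy.ne', abs_le]
  constructor
  · refine le_trans ?_ (one_sub_inv_le_log_of_pos (div_pos hx hy))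
    rw [inv_div, ← div_self hx.ne', ← sub_div, le_div_iff₀ hx]
    nlinarith
  · refine (log_le_sub_one_of_pos (div_pos hx hy)).trans ?_
    rw [div_sub_one hy.ne', div_le_iff₀ hy]
    nlinarith

variable {Ω : Type*} {mΩ : MeasurableSpace Ω} {P : Measure Ω} [IsProbabilityMeasure P]

theorem integral_pos_of_pos {f : Ω → ℝ} (hf : Integrable f P) (hpos : ∀ ω, 0 < f ω) :
    0 < ∫ ω, f ω ∂P := by
  have hsupport : Function.support f = Set.univ :=
    Set.eq_univ_of_forall fun ω ↦ (hpos ω).ne'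
  rw [integral_pos_iff_support_of_nonneg (fun ω ↦ (hpos ω).le) hf, hsupport, measure_univ]
  exact one_pos

theorem log_integral_le_log_integral_add {f g : Ω → ℝ} (hf : Integrable f P) (hg : Integrable g P)
    (hf0 : ∀ ω, 0 < f ω) (hg0 : ∀ ω, 0 < g ω) {ε : ℝ} (hfg : ∀ ω, log (f ω) ≤ log (g ω) + ε) :
    log (∫ ω, f ω ∂P) ≤ log (∫ ω, g ω ∂P) + ε := by
  have hle : ∫ ω, f ω ∂P ≤ (∫ ω, g ω ∂P) * exp ε := by
    rw [← integral_mul_const]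
    refine integral_mono hf (hg.mul_const _) fun ω ↦ ?_
    have h := exp_le_exp.2 (hfg ω)
    rwa [exp_add, exp_log (hf0 ω), exp_log (hg0 ω)] at h
  refine (log_le_log (integral_pos_of_pos hf hf0) hle).trans_eq ?_
  rw [log_mul (integral_pos_of_pos hg hg0).ne' (exp_pos _).ne', log_exp]

theorem abs_log_integral_sub_log_integral_le {f g : Ω → ℝ} (hf : Integrable f P)
    (hg : Integrable g P) (hf0 : ∀ ω, 0 < f ω) (hg0 : ∀ ω, 0 < g ω) {ε : ℝ}
    (hfg : ∀ ω, |log (f ω) - log (g ω)| ≤ ε) :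
    |log (∫ ω, f ω ∂P) - log (∫ ω, g ω ∂P)| ≤ ε := by
  refine abs_sub_le_iff.2 ⟨?_, ?_⟩
  · rw [sub_le_iff_le_add']
    exact log_integral_le_log_integral_add hf hg hf0 hg0 fun ω ↦ by
      linarith [(abs_sub_le_iff.1 (hfg ω)).1]
  · rw [sub_le_iff_le_add']
    exact log_integral_le_log_integral_add hg hf hg0 hf0 fun ω ↦ by
      linarith [(abs_sub_le_iff.1 (hfg ω)).2]

end Analysis

section Truncation

/-- Truncation of `t` at level `M`, with value `0` beyond that level; unlike
`ProbabilityTheory.truncation` it keeps both endpoints `t = ± M`. -/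
noncomputable def truncate (M t : ℝ) : ℝ := if |t| ≤ M then t else 0

theorem measurable_truncate (M : ℝ) : Measurable (truncate M) :=
  Measurable.ite (measurableSet_le (by fun_prop) measurable_const) measurable_id measurable_const

theorem abs_truncate_le {M : ℝ} (hM : 0 ≤ M) (t : ℝ) : |truncate M t| ≤ M := by
  unfold truncate
  split_ifs with h
  · exact h
  · rwa [abs_zero]

theorem abs_truncate_le_abs (M t : ℝ) : |truncate M t| ≤ |t| := by
  unfold truncate
  split_ifs
  · rfl
  · rw [abs_zero]
    exact abs_nonneg t

/-- The limit of the density of `productLaw (m + 2 * t / √N)` with respect to `productLaw m`, for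
`a = 1 - m ^ 2` and fluctuation `w`. -/
noncomputable def limitDensity (a w t : ℝ) : ℝ := exp (2 * (w * t - t ^ 2) / a)

variable {a w M : ℝ} {γ : Measure ℝ} [IsProbabilityMeasure γ]

theorem limitDensity_pos (a w t : ℝ) : 0 < limitDensity a w t := exp_pos _

theorem limitDensity_le (ha : 0 < a) (w t : ℝ) : limitDensity a w t ≤ exp (w ^ 2 / (2 * a)) := by
  rw [limitDensity, exp_le_exp, div_le_div_iff₀ ha (by positivity)]
  nlinarith [mul_nonneg ha.le (sq_nonneg (w - 2 * t))]

theorem integrable_limitDensity_comp (ha : 0 < a) (w : ℝ) {f : ℝ → ℝ} (hf : Measurable f) :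
    Integrable (fun t ↦ limitDensity a w (f t)) γ := by
  refine Integrable.of_bound (by unfold limitDensity; fun_prop) (exp (w ^ 2 / (2 * a)))
    (ae_of_all _ fun t ↦ ?_)
  rw [norm_eq_abs, abs_of_pos (limitDensity_pos ..)]
  exact limitDensity_le ha w _

theorem abs_limitDensity_truncate_sub_le (ha : 0 < a) (hw : |w| ≤ M) (t : ℝ) :
    |limitDensity a w (truncate M t) - limitDensity a w t| ≤ exp (-M) * exp (2 * |t|) := by
  unfold truncate
  split_ifs with ht
  · rw [sub_self, abs_zero]
    positivity
  have hle_one : limitDensity a w t ≤ 1 := by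
    have hwt : w * t ≤ t ^ 2 := by
      calc w * t ≤ |w| * |t| := abs_mul w t ▸ le_abs_self _
        _ ≤ |t| * |t| :=
          mul_le_mul_of_nonneg_right (hw.trans (not_le.1 ht).le) (abs_nonneg t)
        _ = t ^ 2 := by rw [← sq, sq_abs]
    exact exp_le_one_iff.2 (div_nonpos_of_nonpos_of_nonneg (by linarith) ha.le)
  have hzero : limitDensity a w 0 = 1 := by simp [limitDensity]
  rw [hzero, abs_of_nonneg (by linarith), ← exp_add]
  have hexp : 1 ≤ exp (-M + 2 * |t|) := one_le_exp (by linarith [abs_nonneg t, not_le.1 ht])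
  linarith [limitDensity_pos a w t]

theorem abs_integral_limitDensity_truncate_sub_le (ha : 0 < a) (hw : |w| ≤ M)
    (hγ : Integrable (fun t ↦ exp (2 * |t|)) γ) :
    |∫ t, limitDensity a w (truncate M t) ∂γ - ∫ t, limitDensity a w t ∂γ| ≤
      exp (-M) * ∫ t, exp (2 * |t|) ∂γ := by
  have hint := integrable_limitDensity_comp (γ := γ) ha w (measurable_truncate M)
  have hint' : Integrable (limitDensity a w) γ := integrable_limitDensity_comp ha w measurable_id
  rw [← integral_sub hint hint', ← integral_const_mul]
  exact abs_integral_le_integral_abs.trans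
    (integral_mono (hint.sub hint').abs (hγ.const_mul _) (abs_limitDensity_truncate_sub_le ha hw))

theorem abs_log_integral_limitDensity_truncate_sub_le (ha : 0 < a) (hw : |w| ≤ M)
    (hγ : Integrable (fun t ↦ exp (2 * |t|)) γ) {β C : ℝ} (hβ : 0 ≤ β) (hC : 0 < C)
    (htilt : ∫ t, limitDensity a w t ∂γ = C * exp (β * w ^ 2 / 2))
    (hM : exp (-M) * (∫ t, exp (2 * |t|) ∂γ) / C ≤ 1 / 2) :
    |log (∫ t, limitDensity a w (truncate M t) ∂γ) - (log C + β * w ^ 2 / 2)| ≤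
      2 * (exp (-M) * (∫ t, exp (2 * |t|) ∂γ) / C) := by
  have hlog : log C + β * w ^ 2 / 2 = log (C * exp (β * w ^ 2 / 2)) := by
    rw [log_mul hC.ne' (exp_pos _).ne', log_exp]
  rw [hlog]
  refine abs_log_sub_log_le (by positivity) hM ?_
  rw [← htilt]
  refine (abs_integral_limitDensity_truncate_sub_le ha hw hγ).trans ?_
  rw [htilt, ← mul_assoc, div_mul_cancel₀ _ hC.ne']
  exact le_mul_of_one_le_right (by positivity) (one_le_exp (by positivity))

end Truncation

section ShiftedProductLaw

variable {m η : ℝ} {N : ℕ}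

theorem abs_add_lt_one (hm : |m| < 1) (hη : 4 * |η| ≤ 1 - m ^ 2) : |m + η| < 1 := by
  have hsq := sq_abs m
  nlinarith [abs_add_le m η, abs_nonneg m]

theorem abs_mul_spinSign_sub_div_le (hm : |m| < 1) (η : ℝ) (b : Bool) :
    |η * (spinSign b - m) / (1 - m ^ 2)| ≤ 2 * |η| / (1 - m ^ 2) := by
  have ha := one_sub_sq_pos hm
  rw [abs_div, abs_mul, abs_of_pos ha, mul_comm 2]
  gcongr
  exact abs_spinSign_sub_le hm b

theorem two_mul_abs_div_le_half (hm : |m| < 1) (hη : 4 * |η| ≤ 1 - m ^ 2) :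
    2 * |η| / (1 - m ^ 2) ≤ 1 / 2 := by
  rw [div_le_iff₀ (one_sub_sq_pos hm)]
  linarith

theorem productLaw_add (hm : |m| < 1) (η : ℝ) (σ : Fin N → Bool) :
    productLaw (m + η) σ =
      productLaw m σ * ∏ i, (1 + η * (spinSign (σ i) - m) / (1 - m ^ 2)) := by
  simp only [productLaw, spinWeight_add hm, Finset.prod_mul_distrib]

theorem productLaw_add_bounds (hm : |m| < 1) (hη : 4 * |η| ≤ 1 - m ^ 2) (σ : Fin N → Bool) :
    productLaw m σ * (1 / 2) ^ N ≤ productLaw (m + η) σ ∧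
      productLaw (m + η) σ ≤ productLaw m σ * 2 ^ N := by
  let x (i : Fin N) : ℝ := η * (spinSign (σ i) - m) / (1 - m ^ 2)
  have hx (i : Fin N) : -(1 / 2) ≤ x i ∧ x i ≤ 1 / 2 :=
    abs_le.1 ((abs_mul_spinSign_sub_div_le hm η _).trans (two_mul_abs_div_le_half hm hη))
  have hlower : ∏ _i : Fin N, (1 / 2 : ℝ) ≤ ∏ i, (1 + x i) :=
    Finset.prod_le_prod (fun _ _ ↦ by norm_num) fun i _ ↦ by linarith [hx i]
  have hupper : ∏ i, (1 + x i) ≤ ∏ _i : Fin N, (2 : ℝ) :=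
    Finset.prod_le_prod (fun i _ ↦ by linarith [hx i]) fun i _ ↦ by linarith [hx i]
  simp only [Finset.prod_const, Finset.card_univ, Fintype.card_fin] at hlower hupper
  have hpos := (productLaw_pos hm σ).le
  rw [productLaw_add hm]
  exact ⟨mul_le_mul_of_nonneg_left hlower hpos, mul_le_mul_of_nonneg_left hupper hpos⟩

theorem fluctuation_eq_fluctuation_add (hN : 0 < N) (m τ : ℝ) (σ : Fin N → Bool) :
    fluctuation m σ = fluctuation (m + 2 * τ / √N) σ + 2 * τ := by
  simp only [fluctuation, Finset.sum_sub_distrib, Finset.sum_const, Finset.card_univ,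
    Fintype.card_fin, nsmul_eq_mul]
  field_simp
  linear_combination (-2 * τ) * sq_sqrt (Nat.cast_nonneg (α := ℝ) N)

theorem sum_productLaw_mul_exp_abs_le (hm : |m| < 1) (hN : 0 < N) :
    ∑ σ : Fin N → Bool, productLaw m σ * exp |fluctuation m σ| ≤ 2 * exp (1 / 2) := by
  have hmoment (x : ℝ) (hx : x ^ 2 = 1) :
      ∑ σ : Fin N → Bool, productLaw m σ * exp (x * fluctuation m σ) ≤ exp (1 / 2) := by
    simpa [hx] using sum_productLaw_mul_exp_le hm (isSubgaussianSpin_one hm) hN x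
  calc _ ≤ ∑ σ : Fin N → Bool, (productLaw m σ * exp (1 * fluctuation m σ) +
          productLaw m σ * exp (-1 * fluctuation m σ)) := Finset.sum_le_sum fun σ _ ↦ by
        rw [← mul_add, one_mul, neg_one_mul]
        exact mul_le_mul_of_nonneg_left (exp_abs_le _) (productLaw_pos hm σ).le
    _ ≤ 2 * exp (1 / 2) := by
        rw [Finset.sum_add_distrib]
        linarith [hmoment 1 (by norm_num), hmoment (-1) (by norm_num)]

theorem sum_productLaw_add_mul_exp_abs_le {τ : ℝ} (hτ : |m + 2 * τ / √N| < 1) (hN : 0 < N) :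
    ∑ σ : Fin N → Bool, productLaw (m + 2 * τ / √N) σ * exp |fluctuation m σ| ≤
      2 * exp (1 / 2) * exp (2 * |τ|) := by
  calc _ ≤ ∑ σ : Fin N → Bool, productLaw (m + 2 * τ / √N) σ *
          exp |fluctuation (m + 2 * τ / √N) σ| * exp (2 * |τ|) :=
        Finset.sum_le_sum fun σ _ ↦ by
          rw [mul_assoc, ← exp_add, fluctuation_eq_fluctuation_add hN m τ]
          refine mul_le_mul_of_nonneg_left (exp_le_exp.2 ?_) (productLaw_pos hτ σ).le
          exact (abs_add_le _ _).trans_eq (by rw [abs_mul, abs_two])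
    _ ≤ _ := by
        rw [← Finset.sum_mul]
        gcongr
        exact sum_productLaw_mul_exp_abs_le hτ hN

theorem sum_spinSign_sub (hN : 0 < N) (m : ℝ) (σ : Fin N → Bool) :
    ∑ i, (spinSign (σ i) - m) = √N * fluctuation m σ := by
  rw [fluctuation, mul_div_cancel₀ _ (sqrt_pos.2 (Nat.cast_pos.2 hN)).ne']

theorem sum_spinSign_sub_sq (hN : 0 < N) (m : ℝ) (σ : Fin N → Bool) :
    ∑ i, (spinSign (σ i) - m) ^ 2 = N * (1 - m ^ 2) - 2 * m * (√N * fluctuation m σ) := by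
  have hsq (b : Bool) : (spinSign b - m) ^ 2 = (1 - m ^ 2) - 2 * m * (spinSign b - m) := by
    linear_combination spinSign_sq b
  simp only [hsq, Finset.sum_sub_distrib, ← Finset.mul_sum, ← sum_spinSign_sub hN m σ,
    Finset.sum_const, Finset.card_univ, Fintype.card_fin, nsmul_eq_mul]
  ring

theorem log_productLaw_add_sub_log (hm : |m| < 1) (hη : 4 * |η| ≤ 1 - m ^ 2) (σ : Fin N → Bool) :
    log (productLaw (m + η) σ) - log (productLaw m σ) =
      ∑ i, log (1 + η * (spinSign (σ i) - m) / (1 - m ^ 2)) := by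
  have hfactor (i : Fin N) : 1 + η * (spinSign (σ i) - m) / (1 - m ^ 2) ≠ 0 := by
    have h := (abs_mul_spinSign_sub_div_le hm η (σ i)).trans (two_mul_abs_div_le_half hm hη)
    linarith [(abs_le.1 h).1]
  rw [productLaw_add hm, log_mul (productLaw_pos hm σ).ne'
    (Finset.prod_ne_zero_iff.2 fun i _ ↦ hfactor i), log_prod fun i _ ↦ hfactor i]
  ring

theorem four_mul_abs_shift_le {τ M : ℝ} (hm : |m| < 1) (hτ : |τ| ≤ M)
    (hM : 8 * M ≤ (1 - m ^ 2) * √N) : 4 * |2 * τ / √N| ≤ 1 - m ^ 2 := by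
  rw [abs_div, abs_mul, abs_two, abs_of_nonneg (sqrt_nonneg _), ← mul_div_assoc]
  exact div_le_of_le_mul₀ (sqrt_nonneg _) (one_sub_sq_pos hm).le (by linarith)

theorem sum_sub_sum_sq_div_two_eq (hm : |m| < 1) (hN : 0 < N) (τ : ℝ) (σ : Fin N → Bool) :
    ∑ i, 2 * τ / √N * (spinSign (σ i) - m) / (1 - m ^ 2) -
        (∑ i, (2 * τ / √N * (spinSign (σ i) - m) / (1 - m ^ 2)) ^ 2) / 2 =
      2 * (fluctuation m σ * τ - τ ^ 2) / (1 - m ^ 2) +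
        4 * m * τ ^ 2 * fluctuation m σ / ((1 - m ^ 2) ^ 2 * √N) := by
  have ha := (one_sub_sq_pos hm).ne'
  have hs : √(N : ℝ) ≠ 0 := (sqrt_pos.2 (Nat.cast_pos.2 hN)).ne'
  have hN_sq : (N : ℝ) = √N ^ 2 := (sq_sqrt (Nat.cast_nonneg N)).symm
  simp only [div_pow, mul_pow, ← Finset.sum_div, ← Finset.mul_sum, sum_spinSign_sub hN,
    sum_spinSign_sub_sq hN]
  generalize √(N : ℝ) = s at hs hN_sq ⊢
  rw [hN_sq]
  field_simp
  ring

theorem abs_cross_term_le (hm : |m| < 1) {τ M w : ℝ} (hτ : |τ| ≤ M) (hw : |w| ≤ M) :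
    |4 * m * τ ^ 2 * w / ((1 - m ^ 2) ^ 2 * √N)| ≤ 4 / (1 - m ^ 2) ^ 3 * (M ^ 3 / √N) := by
  have ha := one_sub_sq_pos hm
  have hM : 0 ≤ M := (abs_nonneg τ).trans hτ
  have ha_pow : (1 - m ^ 2) ^ 3 ≤ (1 - m ^ 2) ^ 2 :=
    pow_le_pow_of_le_one ha.le (by linarith [sq_nonneg m]) (by norm_num)
  calc _ = 4 * |m| * |τ| ^ 2 * |w| / ((1 - m ^ 2) ^ 2 * √N) := by
        simp only [abs_div, abs_mul, abs_pow, abs_of_pos ha, abs_of_nonneg (sqrt_nonneg (N : ℝ)),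
          Nat.abs_ofNat]
    _ ≤ 4 * 1 * M ^ 2 * M / ((1 - m ^ 2) ^ 2 * √N) := by gcongr
    _ = 4 / (1 - m ^ 2) ^ 2 * (M ^ 3 / √N) := by
        rw [div_mul_div_comm]
        ring
    _ ≤ 4 / (1 - m ^ 2) ^ 3 * (M ^ 3 / √N) := by gcongr

theorem abs_log_productLaw_add_sub_le (hm : |m| < 1) (hN : 0 < N) {τ M : ℝ} (hτ : |τ| ≤ M)
    (hM : 8 * M ≤ (1 - m ^ 2) * √N) {σ : Fin N → Bool} (hW : |fluctuation m σ| ≤ M) :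
    |log (productLaw (m + 2 * τ / √N) σ) - log (productLaw m σ) -
        2 * (fluctuation m σ * τ - τ ^ 2) / (1 - m ^ 2)| ≤
      132 / (1 - m ^ 2) ^ 3 * (M ^ 3 / √N) := by
  have ha := one_sub_sq_pos hm
  have hs : 0 < √(N : ℝ) := sqrt_pos.2 (Nat.cast_pos.2 hN)
  have hshift := four_mul_abs_shift_le hm hτ hM
  have hx (i : Fin N) : |2 * τ / √N * (spinSign (σ i) - m) / (1 - m ^ 2)| ≤
      4 * M / ((1 - m ^ 2) * √N) := by
    refine (abs_mul_spinSign_sub_div_le hm _ _).trans ?_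
    rw [abs_div, abs_mul, abs_two, abs_of_pos hs, mul_comm (1 - m ^ 2), ← div_div,
      ← mul_div_assoc, ← mul_assoc]
    gcongr
    linarith
  have hρ : 4 * M / ((1 - m ^ 2) * √N) ≤ 1 / 2 := by
    rw [div_le_iff₀ (by positivity)]
    linarith
  have hremainder := abs_sum_log_one_add_sub_le hρ hx
  have hcubic : (Fintype.card (Fin N) : ℝ) * (2 * (4 * M / ((1 - m ^ 2) * √N)) ^ 3) =
      128 / (1 - m ^ 2) ^ 3 * (M ^ 3 / √N) := by
    rw [Fintype.card_fin]
    nth_rewrite 1 [← sq_sqrt (Nat.cast_nonneg (α := ℝ) N)]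
    field_simp
    ring
  rw [sum_sub_sum_sq_div_two_eq hm hN, hcubic] at hremainder
  rw [log_productLaw_add_sub_log hm hshift]
  rw [show (132 : ℝ) = 128 + 4 by norm_num, add_div, add_mul]
  refine (abs_sub_le _ _ _).trans (add_le_add hremainder ?_)
  rw [add_sub_cancel_left]
  exact abs_cross_term_le hm hτ hW

end ShiftedProductLaw

section MixedLaw

/-- The mixture of the product laws of mean `m + 2 * t / √N`, where `t` has law `γ` truncated at
level `M`. -/
noncomputable def mixedLaw {N : ℕ} (γ : Measure ℝ) (m M : ℝ) (σ : Fin N → Bool) : ℝ :=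
  ∫ t, productLaw (m + 2 * truncate M t / √N) σ ∂γ

variable {m M : ℝ} {N : ℕ} {γ : Measure ℝ} [IsProbabilityMeasure γ]

theorem productLaw_le_one (hm : |m| < 1) (σ : Fin N → Bool) : productLaw m σ ≤ 1 := by
  rw [← sum_productLaw m N]
  exact Finset.single_le_sum (fun σ _ ↦ (productLaw_pos hm σ).le) (Finset.mem_univ σ)

theorem abs_add_shift_truncate_lt_one (hm : |m| < 1) (hM0 : 0 ≤ M)
    (hM : 8 * M ≤ (1 - m ^ 2) * √N) (t : ℝ) : |m + 2 * truncate M t / √N| < 1 :=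
  abs_add_lt_one hm (four_mul_abs_shift_le hm (abs_truncate_le hM0 t) hM)

theorem integrable_productLaw_shift (hm : |m| < 1) (hM0 : 0 ≤ M) (hM : 8 * M ≤ (1 - m ^ 2) * √N)
    (σ : Fin N → Bool) : Integrable (fun t ↦ productLaw (m + 2 * truncate M t / √N) σ) γ := by
  have hmeas := measurable_truncate M
  refine Integrable.of_bound (by unfold productLaw spinWeight; fun_prop) 1 (ae_of_all _ fun t ↦ ?_)
  have ht := abs_add_shift_truncate_lt_one hm hM0 hM t
  rw [norm_eq_abs, abs_of_pos (productLaw_pos ht σ)]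
  exact productLaw_le_one ht σ

theorem mixedLaw_pos (hm : |m| < 1) (hM0 : 0 ≤ M) (hM : 8 * M ≤ (1 - m ^ 2) * √N)
    (σ : Fin N → Bool) : 0 < mixedLaw γ m M σ :=
  integral_pos_of_pos (integrable_productLaw_shift hm hM0 hM σ)
    fun t ↦ productLaw_pos (abs_add_shift_truncate_lt_one hm hM0 hM t) σ

theorem sum_mixedLaw (hm : |m| < 1) (hM0 : 0 ≤ M) (hM : 8 * M ≤ (1 - m ^ 2) * √N) :
    ∑ σ : Fin N → Bool, mixedLaw γ m M σ = 1 := by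
  unfold mixedLaw
  rw [← integral_finsetSum _ fun σ _ ↦ integrable_productLaw_shift hm hM0 hM σ]
  simp [sum_productLaw]

theorem sum_mixedLaw_mul_exp_abs_le (hm : |m| < 1) (hN : 0 < N) (hM0 : 0 ≤ M)
    (hM : 8 * M ≤ (1 - m ^ 2) * √N) (hγ : Integrable (fun t ↦ exp (2 * |t|)) γ) :
    ∑ σ : Fin N → Bool, mixedLaw γ m M σ * exp |fluctuation m σ| ≤
      2 * exp (1 / 2) * ∫ t, exp (2 * |t|) ∂γ := by
  have hint (σ : Fin N → Bool) :
      Integrable (fun t ↦ productLaw (m + 2 * truncate M t / √N) σ * exp |fluctuation m σ|) γ :=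
    (integrable_productLaw_shift hm hM0 hM σ).mul_const _
  simp only [mixedLaw, ← integral_mul_const]
  rw [← integral_finsetSum _ fun σ _ ↦ hint σ, ← integral_const_mul]
  refine integral_mono (integrable_finsetSum _ fun σ _ ↦ hint σ) (hγ.const_mul _) fun t ↦ ?_
  refine (sum_productLaw_add_mul_exp_abs_le
    (abs_add_shift_truncate_lt_one hm hM0 hM t) hN).trans ?_
  have := abs_truncate_le_abs M t
  gcongr

theorem sum_mixedLaw_le_of_le_abs (hm : |m| < 1) (hN : 0 < N) (hM0 : 0 ≤ M)
    (hM : 8 * M ≤ (1 - m ^ 2) * √N) (hγ : Integrable (fun t ↦ exp (2 * |t|)) γ)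
    {T : Finset (Fin N → Bool)} {r : ℝ} (hT : ∀ σ ∈ T, r ≤ |fluctuation m σ|) :
    ∑ σ ∈ T, mixedLaw γ m M σ ≤ exp (-r) * (2 * exp (1 / 2) * ∫ t, exp (2 * |t|) ∂γ) :=
  (sum_le_exp_neg_mul_sum_exp (fun σ ↦ (mixedLaw_pos hm hM0 hM σ).le) hT).trans <|
    mul_le_mul_of_nonneg_left (sum_mixedLaw_mul_exp_abs_le hm hN hM0 hM hγ) (exp_pos _).le

theorem abs_log_mixedLaw_div_productLaw_le (hm : |m| < 1) (hM0 : 0 ≤ M)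
    (hM : 8 * M ≤ (1 - m ^ 2) * √N) (σ : Fin N → Bool) :
    |log (mixedLaw γ m M σ / productLaw m σ)| ≤ N := by
  have hpos := productLaw_pos hm σ
  have hbounds (t : ℝ) := productLaw_add_bounds hm
    (four_mul_abs_shift_le hm (abs_truncate_le hM0 t) hM) σ
  have hint := integrable_productLaw_shift (γ := γ) hm hM0 hM σ
  have hlower : (2 ^ N)⁻¹ ≤ mixedLaw γ m M σ / productLaw m σ := by
    rw [le_div_iff₀ hpos]
    simpa [mixedLaw, mul_comm] using integral_mono (integrable_const _) hint fun t ↦ (hbounds t).1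
  have hupper : mixedLaw γ m M σ / productLaw m σ ≤ 2 ^ N := by
    rw [div_le_iff₀ hpos]
    simpa [mixedLaw, mul_comm] using integral_mono hint (integrable_const _) fun t ↦ (hbounds t).2
  have hlog : log ((2 : ℝ) ^ N) ≤ N := by
    rw [log_pow]
    nlinarith [log_two_lt_d9, Nat.cast_nonneg (α := ℝ) N]
  have hlog_lower := log_le_log (by positivity) hlower
  rw [log_inv] at hlog_lower
  exact abs_le.2 ⟨by linarith,
    (log_le_log (div_pos (mixedLaw_pos hm hM0 hM σ) hpos) hupper).trans hlog⟩

theorem abs_log_mixedLaw_sub_log_le (hm : |m| < 1) (hN : 0 < N) (hM : 8 * M ≤ (1 - m ^ 2) * √N)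
    {σ : Fin N → Bool} (hW : |fluctuation m σ| ≤ M) :
    |log (mixedLaw γ m M σ) - (log (productLaw m σ) +
        log (∫ t, limitDensity (1 - m ^ 2) (fluctuation m σ) (truncate M t) ∂γ))| ≤
      132 / (1 - m ^ 2) ^ 3 * (M ^ 3 / √N) := by
  have hM0 : 0 ≤ M := (abs_nonneg _).trans hW
  have hpos := productLaw_pos hm σ
  have hdensity_pos := limitDensity_pos (1 - m ^ 2) (fluctuation m σ)
  have hint := integrable_limitDensity_comp (γ := γ) (one_sub_sq_pos hm) (fluctuation m σ)
    (measurable_truncate M)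
  rw [← log_mul hpos.ne' (integral_pos_of_pos hint fun t ↦ hdensity_pos _).ne',
    ← integral_const_mul]
  refine abs_log_integral_sub_log_integral_le (integrable_productLaw_shift hm hM0 hM σ)
    (hint.const_mul _) (fun t ↦ productLaw_pos (abs_add_shift_truncate_lt_one hm hM0 hM t) σ)
    (fun t ↦ mul_pos hpos (hdensity_pos _)) fun t ↦ ?_
  rw [log_mul hpos.ne' (hdensity_pos _).ne', limitDensity, log_exp, ← sub_sub]
  exact abs_log_productLaw_add_sub_le hm hN (abs_truncate_le hM0 t) hM hW

theorem abs_log_mixedLaw_div_productLaw_sub_le (hm : |m| < 1) (hN : 0 < N)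
    (hM : 8 * M ≤ (1 - m ^ 2) * √N) (hγ : Integrable (fun t ↦ exp (2 * |t|)) γ) {β C : ℝ}
    (hβ : 0 ≤ β) (hC : 0 < C)
    (htilt : ∀ w, ∫ t, limitDensity (1 - m ^ 2) w t ∂γ = C * exp (β * w ^ 2 / 2))
    (htail : exp (-M) * (∫ t, exp (2 * |t|) ∂γ) / C ≤ 1 / 2)
    {σ : Fin N → Bool} (hW : |fluctuation m σ| ≤ M) :
    |log (mixedLaw γ m M σ / productLaw m σ) - (log C + β * fluctuation m σ ^ 2 / 2)| ≤
      132 / (1 - m ^ 2) ^ 3 * (M ^ 3 / √N) + 2 * (exp (-M) * (∫ t, exp (2 * |t|) ∂γ) / C) := by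
  have hexpansion := abs_log_mixedLaw_sub_log_le (γ := γ) hm hN hM hW
  have htruncation := abs_log_integral_limitDensity_truncate_sub_le (one_sub_sq_pos hm) hW hγ hβ hC
    (htilt _) htail
  rw [← sub_sub] at hexpansion
  rw [log_div (mixedLaw_pos hm ((abs_nonneg _).trans hW) hM σ).ne' (productLaw_pos hm σ).ne']
  exact (abs_sub_le _ _ _).trans (add_le_add hexpansion htruncation)

end MixedLaw

section GaussianMixing

/-- The variance for which Gaussian mixing turns `limitDensity a w` into a multiple of
`exp (β * w ^ 2 / 2)`; it equals `r ^ 2` for `a = 1 - m ^ 2`. -/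
noncomputable def mixingVariance (β a : ℝ) : ℝ := β * a ^ 2 / (4 - 4 * β * a)

theorem integral_exp_mul_sub_mul_sq {c : ℝ} (hc : 0 < c) (b : ℝ) :
    ∫ t : ℝ, exp (b * t - c * t ^ 2) = √(π / c) * exp (b ^ 2 / (4 * c)) := by
  have hsquare (t : ℝ) : exp (b * t - c * t ^ 2) =
      exp (-c * (t - b / (2 * c)) ^ 2) * exp (b ^ 2 / (4 * c)) := by
    rw [← exp_add]
    congr 1
    field_simp
    ring
  simp only [hsquare]
  rw [integral_mul_const, integral_sub_right_eq_self (fun t ↦ exp (-c * t ^ 2)), integral_gaussian]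

variable {a β : ℝ} {v : NNReal}

theorem integral_limitDensity_gaussianReal (ha : 0 < a) (hv : v ≠ 0) (w : ℝ) :
    ∫ t, limitDensity a w t ∂ProbabilityTheory.gaussianReal 0 v =
      √(a / (a + 4 * v)) * exp (4 * v / (a * (a + 4 * v)) * w ^ 2 / 2) := by
  have hexp (t : ℝ) : ProbabilityTheory.gaussianPDFReal 0 v t • limitDensity a w t =
      (√(2 * π * v))⁻¹ * exp (2 * w / a * t - (a + 4 * v) / (2 * a * v) * t ^ 2) := by
    rw [ProbabilityTheory.gaussianPDFReal_def, limitDensity, smul_eq_mul, mul_assoc, ← exp_add]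
    congr 2
    field_simp
    ring
  rw [ProbabilityTheory.integral_gaussianReal_eq_integral_smul hv]
  simp only [hexp]
  rw [integral_const_mul, integral_exp_mul_sub_mul_sq (by positivity), ← mul_assoc, ← sqrt_inv,
    ← sqrt_mul (by positivity)]
  congr 2 <;> field_simp
  ring

theorem mixingVariance_pos (ha : 0 < a) (hβ : 0 < β) (hβa : β * a < 1) :
    0 < mixingVariance β a :=
  div_pos (by positivity) (by linarith)

theorem integral_limitDensity_gaussianReal_mixingVariance (ha : 0 < a) (hβ : 0 < β)
    (hβa : β * a < 1) (hv : (v : ℝ) = mixingVariance β a) (w : ℝ) :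
    ∫ t, limitDensity a w t ∂ProbabilityTheory.gaussianReal 0 v =
      √(a / (a + 4 * v)) * exp (β * w ^ 2 / 2) := by
  have hv0 : v ≠ 0 := by
    rw [← NNReal.coe_ne_zero, hv]
    exact (mixingVariance_pos ha hβ hβa).ne'
  have hden : 1 - β * a ≠ 0 := by linarith
  have hfour : 4 * (v : ℝ) = β * a ^ 2 / (1 - β * a) := by
    rw [hv, mixingVariance, show 4 - 4 * β * a = 4 * (1 - β * a) by ring, ← mul_div_assoc,
      mul_div_mul_left _ _ four_ne_zero]
  have hsum : a + 4 * v = a / (1 - β * a) := by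
    rw [hfour, eq_div_iff hden, add_mul, div_mul_cancel₀ _ hden]
    ring
  have hcoeff : 4 * v / (a * (a + 4 * v)) = β := by
    rw [hsum, hfour, ← mul_div_assoc, div_div_div_cancel_right₀ hden]
    field_simp
  rw [integral_limitDensity_gaussianReal ha hv0, hcoeff]

theorem integrable_exp_two_mul_abs_gaussianReal (v : NNReal) :
    Integrable (fun t ↦ exp (2 * |t|)) (ProbabilityTheory.gaussianReal 0 v) :=
  ProbabilityTheory.integrable_exp_mul_abs (ProbabilityTheory.integrable_exp_mul_gaussianReal 2)
    (ProbabilityTheory.integrable_exp_mul_gaussianReal (-2))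

end GaussianMixing

section Comparison

variable {m v β C : ℝ} {N : ℕ} {γ : Measure ℝ} [IsProbabilityMeasure γ]

theorem abs_log_tiltedLaw_div_mixedLaw_sub_eq (hm : |m| < 1) {M : ℝ} (hM0 : 0 ≤ M)
    (hM : 8 * M ≤ (1 - m ^ 2) * √N) (β C : ℝ) (σ : Fin N → Bool) :
    |log (tiltedLaw β m σ / mixedLaw γ m M σ) - (-log (tiltNormalizer β m N) - log C)| =
      |log (mixedLaw γ m M σ / productLaw m σ) - (log C + β * fluctuation m σ ^ 2 / 2)| := by
  have hlog := log_tiltedLaw_div_productLaw hm β σ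
  rw [← abs_neg, ← div_div_div_cancel_right₀ (productLaw_pos hm σ).ne',
    log_div (div_pos (tiltedLaw_pos hm β σ) (productLaw_pos hm σ)).ne'
      (div_pos (mixedLaw_pos hm hM0 hM σ) (productLaw_pos hm σ)).ne', hlog]
  congr 1
  ring

theorem abs_log_mixedLaw_div_productLaw_sub_le_mul (hm : |m| < 1) {M : ℝ} (hM0 : 0 ≤ M)
    (hN : 0 < N) (hM : 8 * M ≤ (1 - m ^ 2) * √N) (hβ : 0 ≤ β) (C : ℝ) (σ : Fin N → Bool) :
    |log (mixedLaw γ m M σ / productLaw m σ) - (log C + β * fluctuation m σ ^ 2 / 2)| ≤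
      (1 + 2 * β + |log C|) * N := by
  have hN1 : (1 : ℝ) ≤ N := Nat.one_le_cast.2 hN
  have hquad : |β * fluctuation m σ ^ 2 / 2| ≤ 2 * β * N := by
    rw [abs_of_nonneg (by positivity)]
    nlinarith [mul_le_mul_of_nonneg_left (fluctuation_sq_le hm σ) hβ]
  have hC : |log C| ≤ |log C| * N := le_mul_of_one_le_right (abs_nonneg _) hN1
  calc _ ≤ |log (mixedLaw γ m M σ / productLaw m σ)| + |log C + β * fluctuation m σ ^ 2 / 2| :=
        abs_sub _ _
    _ ≤ N + (|log C| + |β * fluctuation m σ ^ 2 / 2|) :=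
        add_le_add (abs_log_mixedLaw_div_productLaw_le hm hM0 hM σ) (abs_add_le _ _)
    _ ≤ _ := by linarith

theorem sum_tiltedLaw_add_sum_mixedLaw_le (hm : |m| < 1) (hN : 0 < N) (hβ : 0 ≤ β)
    (hv : IsSubgaussianSpin m v) (hv0 : 0 < v) (hβv : β * v ≤ 1)
    (hγ : Integrable (fun t ↦ exp (2 * |t|)) γ) {M : ℝ} (hM1 : 1 ≤ M)
    (hM : 8 * M ≤ (1 - m ^ 2) * √N) {T : Finset (Fin N → Bool)}
    (hT : ∀ σ ∈ T, M ≤ |fluctuation m σ|) :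
    ∑ σ ∈ T, tiltedLaw β m σ + ∑ σ ∈ T, mixedLaw γ m M σ ≤
      2 * N * exp (-((1 - β * v) / (2 * v) * M)) +
        2 * exp (1 / 2) * (∫ t, exp (2 * |t|) ∂γ) * exp (-M) := by
  have hN1 : (1 : ℝ) ≤ N := Nat.one_le_cast.2 hN
  have hsq : ∀ σ ∈ T, M ≤ fluctuation m σ ^ 2 := fun σ hσ ↦ by
    rw [← sq_abs]
    nlinarith [hT σ hσ]
  have htilted := sum_tiltedLaw_le_of_le_sq hm hβ hv hv0 hβv hN hsq
  have hmixed := sum_mixedLaw_le_of_le_abs hm hN (by linarith) hM hγ hT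
  rw [mul_comm] at htilted hmixed
  refine add_le_add (htilted.trans ?_) hmixed
  gcongr
  linarith

theorem relEnt_add_relEnt_swap_tiltedLaw_mixedLaw_le (hm : |m| < 1) (hN : 0 < N) (hβ : 0 ≤ β)
    (hv : IsSubgaussianSpin m v) (hv0 : 0 < v) (hβv : β * v ≤ 1)
    (hγ : Integrable (fun t ↦ exp (2 * |t|)) γ) (hC : 0 < C)
    (htilt : ∀ w, ∫ t, limitDensity (1 - m ^ 2) w t ∂γ = C * exp (β * w ^ 2 / 2))
    {M : ℝ} (hM1 : 1 ≤ M) (hM : 8 * M ≤ (1 - m ^ 2) * √N)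
    (htail : exp (-M) * (∫ t, exp (2 * |t|) ∂γ) / C ≤ 1 / 2) :
    relEnt (tiltedLaw β m : (Fin N → Bool) → ℝ) (mixedLaw γ m M) +
        relEnt (mixedLaw γ m M : (Fin N → Bool) → ℝ) (tiltedLaw β m) ≤
      2 * (132 / (1 - m ^ 2) ^ 3 * (M ^ 3 / √N) + 2 * (exp (-M) * (∫ t, exp (2 * |t|) ∂γ) / C)) +
        (1 + 2 * β + |log C|) * N * (2 * N * exp (-((1 - β * v) / (2 * v) * M)) +
          2 * exp (1 / 2) * (∫ t, exp (2 * |t|) ∂γ) * exp (-M)) := by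
  have hM0 : 0 ≤ M := by linarith
  have ha := one_sub_sq_pos hm
  let T : Finset (Fin N → Bool) := {σ | |fluctuation m σ| ≤ M}
  let l : ℝ := -log (tiltNormalizer β m N) - log C
  have htypical (σ) (hσ : σ ∈ T) : |log (tiltedLaw β m σ / mixedLaw γ m M σ) - l| ≤
      132 / (1 - m ^ 2) ^ 3 * (M ^ 3 / √N) + 2 * (exp (-M) * (∫ t, exp (2 * |t|) ∂γ) / C) := by
    rw [abs_log_tiltedLaw_div_mixedLaw_sub_eq hm hM0 hM]
    exact abs_log_mixedLaw_div_productLaw_sub_le hm hN hM hγ hβ hC htilt htail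
      (Finset.mem_filter.1 hσ).2
  have hcrude (σ) (_ : σ ∉ T) : |log (tiltedLaw β m σ / mixedLaw γ m M σ) - l| ≤
      (1 + 2 * β + |log C|) * N := by
    rw [abs_log_tiltedLaw_div_mixedLaw_sub_eq hm hM0 hM]
    exact abs_log_mixedLaw_div_productLaw_sub_le_mul hm hM0 hN hM hβ C σ
  have hatypical (σ) (hσ : σ ∈ Tᶜ) : M ≤ |fluctuation m σ| := by
    rw [Finset.mem_compl, Finset.mem_filter_univ] at hσ
    exact (not_le.1 hσ).le
  refine (relEnt_add_relEnt_swap_le (fun σ ↦ (tiltedLaw_pos hm β σ).le)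
    (fun σ ↦ (mixedLaw_pos hm hM0 hM σ).le) (sum_tiltedLaw hm β N) (sum_mixedLaw hm hM0 hM)
    (by positivity) htypical hcrude).trans ?_
  refine add_le_add le_rfl (mul_le_mul_of_nonneg_left ?_ (by positivity))
  exact sum_tiltedLaw_add_sum_mixedLaw_le hm hN hβ hv hv0 hβv hγ hM1 hM hatypical

end Comparison

section Asymptotics

variable {M : ℕ → ℝ}

theorem tendsto_atTop_of_div_log (hM : Tendsto (fun N : ℕ ↦ M N / log N) atTop atTop) :
    Tendsto M atTop atTop := by
  have hlog : Tendsto (fun N : ℕ ↦ log N) atTop atTop :=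
    tendsto_log_atTop.comp tendsto_natCast_atTop_atTop
  refine (hM.atTop_mul_atTop₀ hlog).congr' ?_
  filter_upwards [hlog.eventually_ne_atTop 0] with N hN using div_mul_cancel₀ _ hN

theorem tendsto_pow_mul_exp_neg_mul (hM : Tendsto (fun N : ℕ ↦ M N / log N) atTop atTop) {c : ℝ}
    (hc : 0 < c) (k : ℕ) : Tendsto (fun N : ℕ ↦ (N : ℝ) ^ k * exp (-(c * M N))) atTop (nhds 0) := by
  refine squeeze_zero' (Eventually.of_forall fun N ↦ by positivity) ?_
    tendsto_inv_atTop_nhds_zero_nat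
  filter_upwards [hM.eventually_ge_atTop ((k + 1) / c), eventually_gt_atTop 1] with N hlarge hN
  have hN0 : (0 : ℝ) < N := by positivity
  have hlog : 0 < log N := log_pos (Nat.one_lt_cast.2 hN)
  have hexponent : log N * (k + 1) ≤ c * M N := by
    rw [div_le_div_iff₀ hc hlog] at hlarge
    linarith
  calc (N : ℝ) ^ k * exp (-(c * M N)) ≤ (N : ℝ) ^ k * exp (-(log N * (k + 1))) := by gcongr
    _ = (N : ℝ)⁻¹ := by
      rw [exp_neg, exp_mul, exp_log hN0, ← Nat.cast_add_one, rpow_natCast, pow_succ]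
      field_simp

theorem eventually_le_mul_sqrt (hM : Tendsto M atTop atTop)
    (hM3 : Tendsto (fun N : ℕ ↦ M N ^ 3 / √N) atTop (nhds 0)) {b : ℝ} (hb : 0 < b) :
    ∀ᶠ N : ℕ in atTop, M N ≤ b * √N := by
  filter_upwards [hM.eventually_ge_atTop 1, hM3.eventually_le_const hb, eventually_gt_atTop 0]
    with N hM1 hle hN
  rw [div_le_iff₀ (sqrt_pos.2 (Nat.cast_pos.2 hN))] at hle
  exact (le_self_pow₀ hM1 (by norm_num)).trans hle

theorem tendsto_comparison_bound (hM : Tendsto (fun N : ℕ ↦ M N / log N) atTop atTop)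
    (hM3 : Tendsto (fun N : ℕ ↦ M N ^ 3 / √N) atTop (nhds 0)) {c : ℝ} (hc : 0 < c)
    (A B C D E : ℝ) :
    Tendsto (fun N : ℕ ↦ 2 * (A * (M N ^ 3 / √N) + 2 * (exp (-M N) * B / C)) +
      D * N * (2 * N * exp (-(c * M N)) + E * exp (-M N))) atTop (nhds 0) := by
  have hexp (k : ℕ) : Tendsto (fun N : ℕ ↦ (N : ℝ) ^ k * exp (-M N)) atTop (nhds 0) := by
    simpa using tendsto_pow_mul_exp_neg_mul hM one_pos k
  have htypical := ((hM3.const_mul A).add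
    ((((hexp 0).mul_const B).div_const C).const_mul 2)).const_mul 2
  have hatypical := (((tendsto_pow_mul_exp_neg_mul hM hc 2).const_mul 2).add
    ((hexp 1).const_mul E)).const_mul D
  convert htypical.add hatypical using 2
  · ring
  · simp

variable {m v β C : ℝ} {γ : Measure ℝ} [IsProbabilityMeasure γ]

theorem tendsto_relEnt_tiltedLaw_mixedLaw (hm : |m| < 1) (hβ : 0 ≤ β) (hv : IsSubgaussianSpin m v)
    (hv0 : 0 < v) (hβv : β * v < 1) (hγ : Integrable (fun t ↦ exp (2 * |t|)) γ) (hC : 0 < C)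
    (htilt : ∀ w, ∫ t, limitDensity (1 - m ^ 2) w t ∂γ = C * exp (β * w ^ 2 / 2))
    (hM : Tendsto (fun N : ℕ ↦ M N / log N) atTop atTop)
    (hM3 : Tendsto (fun N : ℕ ↦ M N ^ 3 / √N) atTop (nhds 0)) :
    Tendsto (fun N ↦ relEnt (tiltedLaw β m : (Fin N → Bool) → ℝ) (mixedLaw γ m (M N)))
        atTop (nhds 0) ∧
      Tendsto (fun N ↦ relEnt (mixedLaw γ m (M N) : (Fin N → Bool) → ℝ) (tiltedLaw β m))
        atTop (nhds 0) := by
  have hM_top := tendsto_atTop_of_div_log hM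
  have ha := one_sub_sq_pos hm
  have htail : Tendsto (fun N ↦ exp (-M N) * (∫ t, exp (2 * |t|) ∂γ) / C) atTop (nhds 0) := by
    simpa using ((tendsto_exp_neg_atTop_nhds_zero.comp hM_top).mul_const _).div_const C
  have hbound := tendsto_comparison_bound hM hM3 (c := (1 - β * v) / (2 * v))
    (div_pos (by linarith) (by linarith)) (132 / (1 - m ^ 2) ^ 3) (∫ t, exp (2 * |t|) ∂γ) C
    (1 + 2 * β + |log C|) (2 * exp (1 / 2) * ∫ t, exp (2 * |t|) ∂γ)
  have hregime : ∀ᶠ N : ℕ in atTop, 0 < N ∧ 1 ≤ M N ∧ 8 * M N ≤ (1 - m ^ 2) * √N := by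
    filter_upwards [eventually_gt_atTop 0, hM_top.eventually_ge_atTop 1,
      eventually_le_mul_sqrt hM_top hM3 (b := (1 - m ^ 2) / 8) (by positivity)]
      with N hN hM1 hM_sqrt using ⟨hN, hM1, by linarith⟩
  have hsum_le := hregime.and (htail.eventually_le_const one_half_pos) |>.mono
    fun N ⟨⟨hN, hM1, hM_sqrt⟩, hM_tail⟩ ↦ relEnt_add_relEnt_swap_tiltedLaw_mixedLaw_le
      hm hN hβ hv hv0 hβv.le hγ hC htilt hM1 hM_sqrt hM_tail
  have hnonneg : ∀ᶠ N in atTop,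
      0 ≤ relEnt (tiltedLaw β m : (Fin N → Bool) → ℝ) (mixedLaw γ m (M N)) ∧
        0 ≤ relEnt (mixedLaw γ m (M N) : (Fin N → Bool) → ℝ) (tiltedLaw β m) := by
    filter_upwards [hregime] with N ⟨_, hM1, hM_sqrt⟩
    have hmixed_pos := mixedLaw_pos (γ := γ) (N := N) hm (by linarith) hM_sqrt
    have hsum := (sum_tiltedLaw hm β N).trans (sum_mixedLaw (γ := γ) hm (by linarith) hM_sqrt).symm
    exact ⟨relEnt_nonneg (tiltedLaw_pos hm β) hmixed_pos hsum,
      relEnt_nonneg hmixed_pos (tiltedLaw_pos hm β) hsum.symm⟩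
  exact ⟨squeeze_zero' (hnonneg.mono fun _ h ↦ h.1)
      (hsum_le.mp (hnonneg.mono fun _ h hle ↦ (le_add_of_nonneg_right h.2).trans hle)) hbound,
    squeeze_zero' (hnonneg.mono fun _ h ↦ h.2)
      (hsum_le.mp (hnonneg.mono fun _ h hle ↦ (le_add_of_nonneg_left h.1).trans hle)) hbound⟩

end Asymptotics

section CurieWeiss

theorem mixedLaw_gaussianReal {v : NNReal} (hv : v ≠ 0) (m M : ℝ) {N : ℕ} (σ : Fin N → Bool) :
    mixedLaw (ProbabilityTheory.gaussianReal 0 v) m M σ =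
      ∫ t, (∏ i, ((1 + spinSign (σ i) * m) / 2 +
        spinSign (σ i) * (if |t| ≤ M then t else 0) / √N)) *
          (exp (-t ^ 2 / (2 * v)) / √(2 * π * v)) := by
  rw [mixedLaw, ProbabilityTheory.integral_gaussianReal_eq_integral_smul hv]
  refine integral_congr_ae (ae_of_all _ fun t ↦ ?_)
  have hweight (b : Bool) : spinWeight (m + 2 * truncate M t / √N) b =
      (1 + spinSign b * m) / 2 + spinSign b * truncate M t / √N := by
    unfold spinWeight
    ring
  simp only [ProbabilityTheory.gaussianPDFReal_def, sub_zero, smul_eq_mul, productLaw, hweight]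
  rw [truncate, mul_comm, inv_mul_eq_div]

theorem tendsto_rpow_div_log {δ : ℝ} (hδ : 0 < δ) :
    Tendsto (fun N : ℕ ↦ (N : ℝ) ^ δ / log N) atTop atTop := by
  have hratio : Tendsto (fun x : ℝ ↦ log x / x ^ δ) atTop (nhdsWithin 0 (Set.Ioi 0)) := by
    refine tendsto_nhdsWithin_iff.2 ⟨(isLittleO_log_rpow_atTop hδ).tendsto_div_nhds_zero, ?_⟩
    filter_upwards [eventually_gt_atTop 1] with x hx
    exact div_pos (log_pos hx) (rpow_pos_of_pos (by linarith) _)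
  exact (hratio.inv_tendsto_nhdsGT_zero.comp tendsto_natCast_atTop_atTop).congr
    fun N ↦ inv_div _ _

theorem tendsto_rpow_pow_three_div_sqrt {δ : ℝ} (hδ : δ < 1 / 6) :
    Tendsto (fun N : ℕ ↦ ((N : ℝ) ^ δ) ^ 3 / √N) atTop (nhds 0) := by
  refine ((tendsto_rpow_neg_atTop (y := 1 / 2 - 3 * δ) (by linarith)).comp
    tendsto_natCast_atTop_atTop).congr' ?_
  filter_upwards [eventually_gt_atTop 0] with N hN
  have hN0 : (0 : ℝ) < N := Nat.cast_pos.2 hN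
  rw [Function.comp_apply, sqrt_eq_rpow, ← rpow_mul_natCast hN0.le, ← rpow_sub hN0]
  congr 1
  push_cast
  ring

end CurieWeiss

theorem stmt_8_general
    (β h : ℝ) (hβ : 0 < β) (hphase : h ≠ 0 ∨ β < 1)
    (m : ℝ) (hm : m = tanh (β * m + h)) (hsign : 0 ≤ h * m)
    (r2 : ℝ) (hr2 : r2 = mixingVariance β (1 - m ^ 2))
    (M : ℕ → ℝ) (hM : Tendsto (fun N : ℕ ↦ M N / log N) atTop atTop)
    (hM3 : Tendsto (fun N : ℕ ↦ M N ^ 3 / √N) atTop (nhds 0))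
    (spin : Bool → ℝ) (hspin : ∀ b, spin b = if b then 1 else -1)
    (Z : ℕ → ℝ)
    (hZ : ∀ N : ℕ, Z N = ∑ σ : Fin N → Bool,
      exp (β / (2 * N) * (∑ i, ∑ j, spin (σ i) * spin (σ j)) + h * ∑ i, spin (σ i)))
    (μ : ∀ N : ℕ, (Fin N → Bool) → ℝ)
    (hμ : ∀ N σ, μ N σ =
      exp (β / (2 * N) * (∑ i, ∑ j, spin (σ i) * spin (σ j)) + h * ∑ i, spin (σ i)) / Z N)
    (gauss : ℝ → ℝ) (hgauss : ∀ t, gauss t = exp (-t ^ 2 / (2 * r2)) / √(2 * π * r2))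
    (ν : ∀ N : ℕ, (Fin N → Bool) → ℝ)
    (hν : ∀ N σ, ν N σ =
      ∫ t : ℝ, (∏ i, ((1 + spin (σ i) * m) / 2 +
          spin (σ i) * (if |t| ≤ M N then t else 0) / √N)) * gauss t) :
    Tendsto (fun N ↦ relEnt (μ N) (ν N)) atTop (nhds 0) ∧
      Tendsto (fun N ↦ relEnt (ν N) (μ N)) atTop (nhds 0) := by
  obtain rfl : spin = spinSign := funext hspin
  obtain ⟨v, hv, hav, hβv⟩ := exists_isSubgaussianSpin hβ hm hphase hsign
  have hm1 : |m| < 1 := hm ▸ abs_tanh_lt_one _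
  have ha := one_sub_sq_pos hm1
  have hβa : β * (1 - m ^ 2) < 1 := (mul_le_mul_of_nonneg_left hav hβ.le).trans_lt hβv
  have hr2_pos : 0 < r2 := hr2 ▸ mixingVariance_pos ha hβ hβa
  lift r2 to NNReal using hr2_pos.le
  have hlimit := tendsto_relEnt_tiltedLaw_mixedLaw hm1 hβ.le hv (ha.trans_le hav) hβv
    (integrable_exp_two_mul_abs_gaussianReal r2) (by positivity)
    (integral_limitDensity_gaussianReal_mixingVariance ha hβ hβa hr2) hM hM3
  have hμ_eq (N) (hN : 0 < N) : μ N = tiltedLaw β m := funext fun σ ↦ by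
    rw [hμ, hZ, ← gibbsWeight_div_sum_eq_tiltedLaw hm hN]
    rfl
  have hν_eq (N) : ν N = mixedLaw (ProbabilityTheory.gaussianReal 0 r2) m (M N) := funext fun σ ↦ by
    simp only [hν, hgauss, mixedLaw_gaussianReal (NNReal.coe_pos.1 hr2_pos).ne']
  refine hlimit.imp (Tendsto.congr' ?_) (Tendsto.congr' ?_) <;>
    filter_upwards [eventually_gt_atTop 0] with N hN <;> rw [hμ_eq N hN, hν_eq]

/-- For the Curie–Weiss model with external field `h > 0` and arbitrary
`β > 0`, let `m⁺ ∈ (0,1)` be the largest solution of `z = tanh(βz + h)` and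
`r² = β(1−(m⁺)²)²/(4−4β(1−(m⁺)²))`. With `ξ̃ ∼ N(0, r²)` truncated at `N^δ`
(`0 < δ < 1/6`) and the mixed product measure `ν_N` below, one has
`H(μ_N|ν_N) → 0` and `H(ν_N|μ_N) → 0`. Spins `±1` are encoded by `Bool`. -/
theorem stmt_8
    (β h : ℝ) (hβ : 0 < β) (hh : 0 < h)
    (mp : ℝ) (hmp_mem : mp ∈ Set.Ioo (0 : ℝ) 1)
    (hmp_sol : mp = Real.tanh (β * mp + h))
    (hmp_largest : ∀ z : ℝ, z = Real.tanh (β * z + h) → z ≤ mp)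
    (r2 : ℝ) (hr2 : r2 = β * (1 - mp ^ 2) ^ 2 / (4 - 4 * β * (1 - mp ^ 2)))
    (δ : ℝ) (hδ0 : 0 < δ) (hδ : δ < 1 / 6)
    (spin : Bool → ℝ) (hspin : ∀ b, spin b = if b then 1 else -1)
    (Z : ℕ → ℝ)
    (hZ : ∀ N : ℕ, Z N = ∑ σ : Fin N → Bool,
      Real.exp (β / (2 * N) * (∑ i, ∑ j, spin (σ i) * spin (σ j)) + h * ∑ i, spin (σ i)))
    (μ : ∀ N : ℕ, (Fin N → Bool) → ℝ)
    (hμ : ∀ N σ, μ N σ =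
      Real.exp (β / (2 * N) * (∑ i, ∑ j, spin (σ i) * spin (σ j)) + h * ∑ i, spin (σ i)) / Z N)
    (gauss : ℝ → ℝ)
    (hgauss : ∀ t, gauss t = Real.exp (-t ^ 2 / (2 * r2)) / Real.sqrt (2 * Real.pi * r2))
    (ν : ∀ N : ℕ, (Fin N → Bool) → ℝ)
    (hν : ∀ N σ, ν N σ =
      ∫ t : ℝ, (∏ i, ((1 + spin (σ i) * mp) / 2 +
          spin (σ i) * (if |t| ≤ (N : ℝ) ^ δ then t else 0) / Real.sqrt N)) * gauss t) :
    Tendsto (fun N => relEnt (μ N) (ν N)) atTop (nhds 0) ∧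
      Tendsto (fun N => relEnt (ν N) (μ N)) atTop (nhds 0) :=
  stmt_8_general β h hβ (.inl hh.ne') mp hmp_sol (mul_pos hh hmp_mem.1).le r2 hr2 _
    (tendsto_rpow_div_log hδ0) (tendsto_rpow_pow_three_div_sqrt hδ) spin hspin Z hZ μ hμ gauss
    hgauss ν hν
end

section
/- Fix an integer q ≥ 2 and a compact set K contained in the interior of Δ (i.e., every m ∈ K has all coordinates strictly positive). Then there exist C > 0 and N₀ ∈ ℕ such that for all N ≥ N₀ and all m ∈ K with N m_k ∈ ℕ for every k, the multinomial coefficient satisfies | (N! / ∏_{k=1}^q (N m_k)!) · √((2πN)^{q−1} ∏_{k=1}^q m_k) · exp(−N ent(m)) − 1 | ≤ C/N. -/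
open Filter Real

/-!
Taking logarithms in Stirling's formula `n! = √(2πn) (n/e)ⁿ exp (r n)` for `N!` and for every
`(N m_k)!`, all main terms cancel because `∑ m_k = 1`, so the normalised multinomial coefficient is
exactly `exp x` with `x = r N - ∑ r (N m_k)`. The remainder `r` is nonnegative and antitone, hence
`r N ≤ r (N m_j) ≤ ∑ r (N m_k)` for any `j`, so `x ≤ 0` and `|exp x - 1| ≤ -x`. Robbins' bound
`r n ≤ 1 / (12 n)` gives `-x ≤ (∑ 1 / m_k) / (12 N)`, and `∑ 1 / m_k` is bounded on `K`.
-/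

/-- The remainder `r n = log (n! / (√(2πn) (n/e)ⁿ))` of Stirling's formula for `n ≥ 1`, encoded
through `Stirling.stirlingSeq n = n! / (√(2n) (n/e)ⁿ)`; its value at `n = 0` is meaningless. -/
noncomputable def stirlingRemainder (n : ℕ) : ℝ :=
  log (Stirling.stirlingSeq n) - log √π

lemma log_factorial_eq_add_stirlingRemainder {n : ℕ} (hn : n ≠ 0) :
    log n.factorial = n * log n - n + log n / 2 + log (2 * π) / 2 + stirlingRemainder n := by
  have hn' : (n : ℝ) ≠ 0 := Nat.cast_ne_zero.mpr hn
  rw [stirlingRemainder, Stirling.log_stirlingSeq_formula, log_sqrt pi_pos.le,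
    log_mul two_ne_zero hn', log_mul two_ne_zero pi_ne_zero, log_div hn' (exp_ne_zero 1), log_exp]
  ring

lemma stirlingRemainder_nonneg {n : ℕ} (hn : n ≠ 0) : 0 ≤ stirlingRemainder n :=
  sub_nonneg.mpr <| log_le_log (sqrt_pos.mpr pi_pos) (Stirling.sqrt_pi_le_stirlingSeq hn)

lemma antitoneOn_stirlingRemainder : AntitoneOn stirlingRemainder (Set.Ici 1) := by
  refine antitoneOn_nat_Ici_of_succ_le fun n hn => sub_le_sub_right ?_ _
  obtain ⟨n, rfl⟩ := Nat.exists_eq_add_of_le' hn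
  exact Stirling.log_stirlingSeq'_antitone n.le_succ

lemma tendsto_stirlingRemainder : Tendsto stirlingRemainder atTop (nhds 0) := by
  have hlog := Stirling.tendsto_stirlingSeq_sqrt_pi.log (sqrt_pos.mpr pi_pos).ne'
  rw [← sub_self (log √π)]
  exact hlog.sub_const (log √π)

lemma monotoneOn_stirlingRemainder_sub :
    MonotoneOn (fun n : ℕ => stirlingRemainder n - 1 / (12 * n)) (Set.Ici 1) := by
  refine monotoneOn_nat_Ici_of_le_succ fun n hn => ?_
  have hn' : (n : ℝ) ≠ 0 := Nat.cast_ne_zero.mpr (Nat.one_le_iff_ne_zero.mp hn)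
  have htelescope : 1 / (12 * n * (n + 1)) = 1 / (12 * (n : ℝ)) - 1 / (12 * (n + 1 : ℕ)) := by
    push_cast
    field
  have hstep := Stirling.log_stirlingSeq_sdiff_le n
  simp only [stirlingRemainder]
  linarith

lemma stirlingRemainder_le {n : ℕ} (hn : n ≠ 0) : stirlingRemainder n ≤ 1 / (12 * n) := by
  have hlim : Tendsto (fun k : ℕ => stirlingRemainder k - 1 / (12 * k)) atTop (nhds 0) := by
    have hinv := (tendsto_one_div_atTop_nhds_zero_nat (𝕜 := ℝ)).const_mul (1 / 12)
    simpa [mul_comm] using tendsto_stirlingRemainder.sub hinv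
  refine sub_nonpos.mp <| ge_of_tendsto hlim ?_
  filter_upwards [eventually_ge_atTop n] with k hk
  have hn1 : 1 ≤ n := Nat.one_le_iff_ne_zero.mpr hn
  exact monotoneOn_stirlingRemainder_sub hn1 (hn1.trans hk) hk

section Multinomial

variable {ι : Type*} [Fintype ι] {N : ℕ} {m : ι → ℝ} {a : ι → ℕ}

lemma log_factorial_sub_sum_log_factorial (hN : N ≠ 0) (hm : ∀ k, 0 < m k) (hsum : ∑ k, m k = 1)
    (ha : ∀ k, N * m k = a k) :
    log N.factorial - ∑ k, log (a k).factorial =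
      N * ∑ k, negMulLog (m k)
        - ((Fintype.card ι - 1) * log (2 * π * N) + ∑ k, log (m k)) / 2
        + (stirlingRemainder N - ∑ k, stirlingRemainder (a k)) := by
  have hN' : (0 : ℝ) < N := Nat.cast_pos.mpr (Nat.pos_of_ne_zero hN)
  have ha0 (k : ι) : a k ≠ 0 := Nat.cast_ne_zero.mp (ha k ▸ (mul_pos hN' (hm k)).ne')
  have hpart (k : ι) : log (a k).factorial =
      (N * log N - N) * m k - N * negMulLog (m k) + log (m k) / 2 + log (2 * π * N) / 2
        + stirlingRemainder (a k) := by
    rw [log_factorial_eq_add_stirlingRemainder (ha0 k), ← ha k, log_mul hN'.ne' (hm k).ne',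
      log_mul two_pi_pos.ne' hN'.ne', negMulLog]
    ring
  simp only [hpart, Finset.sum_add_distrib, Finset.sum_sub_distrib, ← Finset.mul_sum,
    ← Finset.sum_div, hsum, Finset.sum_const, Finset.card_univ, nsmul_eq_mul]
  rw [log_factorial_eq_add_stirlingRemainder hN, log_mul two_pi_pos.ne' hN'.ne']
  ring

lemma normalized_multinomial_eq_exp (hN : N ≠ 0) (hm : ∀ k, 0 < m k) (hsum : ∑ k, m k = 1)
    (ha : ∀ k, N * m k = a k) :
    (N.factorial / ∏ k, ((a k).factorial : ℝ)) *
        √((2 * π * N) ^ (Fintype.card ι - 1) * ∏ k, m k) * exp (-N * ∑ k, negMulLog (m k)) =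
      exp (stirlingRemainder N - ∑ k, stirlingRemainder (a k)) := by
  have hι : 1 ≤ Fintype.card ι :=
    Finset.card_pos.mpr <| Finset.nonempty_of_sum_ne_zero (hsum ▸ one_ne_zero)
  have hprod : 0 < ∏ k, m k := Finset.prod_pos fun k _ => hm k
  have hcoeff : (N.factorial : ℝ) / ∏ k, ((a k).factorial : ℝ) =
      exp (log N.factorial - ∑ k, log (a k).factorial) := by
    rw [← log_prod fun k _ => by positivity, ← log_div (by positivity) (by positivity),
      exp_log (by positivity)]
  have hsqrt : √((2 * π * N) ^ (Fintype.card ι - 1) * ∏ k, m k) =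
      exp (((Fintype.card ι - 1) * log (2 * π * N) + ∑ k, log (m k)) / 2) := by
    rw [← log_prod fun k _ => (hm k).ne', ← Nat.cast_pred hι, ← log_pow,
      ← log_mul (by positivity) hprod.ne', ← log_sqrt (by positivity), exp_log (by positivity)]
  rw [hcoeff, hsqrt, ← exp_add, ← exp_add, log_factorial_sub_sum_log_factorial hN hm hsum ha]
  congr 1
  ring

lemma stirlingRemainder_sum_le [Nonempty ι] (ha : ∀ k, a k ≠ 0) :
    stirlingRemainder (∑ k, a k) ≤ ∑ k, stirlingRemainder (a k) := by
  obtain ⟨j⟩ := ‹Nonempty ι›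
  have haj : 1 ≤ a j := Nat.one_le_iff_ne_zero.mpr (ha j)
  have hle : a j ≤ ∑ k, a k := Finset.single_le_sum_of_canonicallyOrdered (Finset.mem_univ j)
  calc stirlingRemainder (∑ k, a k)
      ≤ stirlingRemainder (a j) := antitoneOn_stirlingRemainder haj (haj.trans hle) hle
    _ ≤ ∑ k, stirlingRemainder (a k) :=
        Finset.single_le_sum (fun k _ => stirlingRemainder_nonneg (ha k)) (Finset.mem_univ j)

lemma sum_stirlingRemainder_le (ha0 : ∀ k, a k ≠ 0) (ha : ∀ k, N * m k = a k) :
    ∑ k, stirlingRemainder (a k) ≤ (∑ k, (m k)⁻¹) / (12 * N) := by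
  calc ∑ k, stirlingRemainder (a k)
      ≤ ∑ k, 1 / (12 * (a k : ℝ)) := Finset.sum_le_sum fun k _ => stirlingRemainder_le (ha0 k)
    _ = ∑ k, (m k)⁻¹ / (12 * N) := by
        refine Finset.sum_congr rfl fun k _ => ?_
        rw [← ha k, ← mul_assoc, one_div, mul_inv_rev, div_eq_mul_inv]
    _ = (∑ k, (m k)⁻¹) / (12 * N) := (Finset.sum_div ..).symm

lemma exists_pos_forall_sum_inv_le {K : Set (ι → ℝ)} (hK : IsCompact K)
    (hpos : ∀ m ∈ K, ∀ k, 0 < m k) : ∃ S > 0, ∀ m ∈ K, ∑ k, (m k)⁻¹ ≤ S := by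
  have hcont : ContinuousOn (fun m : ι → ℝ => ∑ k, (m k)⁻¹) K :=
    continuousOn_finsetSum _ fun k _ =>
      (continuous_apply k).continuousOn.inv₀ fun m hm => (hpos m hm k).ne'
  obtain ⟨S, hS, hbound⟩ := (hK.bddAbove_image hcont).exists_ge 1
  exact ⟨S, zero_lt_one.trans_le hS, fun m hm => hbound _ (Set.mem_image_of_mem _ hm)⟩

end Multinomial

theorem stmt_11_general {ι : Type*} [Fintype ι] {N : ℕ} (hN : N ≠ 0) {m : ι → ℝ}
    (hm : ∀ k, 0 < m k) (hsum : ∑ k, m k = 1) (hint : ∀ k, ∃ a : ℕ, N * m k = a) :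
    |(N.factorial / ∏ k, (⌊N * m k⌋₊.factorial : ℝ)) *
        √((2 * π * N) ^ (Fintype.card ι - 1) * ∏ k, m k) * exp (-N * ∑ k, negMulLog (m k)) - 1| ≤
      (∑ k, (m k)⁻¹) / (12 * N) := by
  choose a ha using hint
  have hN' : (0 : ℝ) < N := Nat.cast_pos.mpr (Nat.pos_of_ne_zero hN)
  have ha0 (k : ι) : a k ≠ 0 := Nat.cast_ne_zero.mp (ha k ▸ (mul_pos hN' (hm k)).ne')
  have hNa : N = ∑ k, a k := by
    rify
    simp only [← ha, ← Finset.mul_sum, hsum, mul_one]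
  have : Nonempty ι :=
    Finset.univ_nonempty_iff.mp <| Finset.nonempty_of_sum_ne_zero (hsum ▸ one_ne_zero)
  have hnonpos : stirlingRemainder N - ∑ k, stirlingRemainder (a k) ≤ 0 :=
    sub_nonpos.mpr (hNa ▸ stirlingRemainder_sum_le ha0)
  simp only [ha, Nat.floor_natCast]
  rw [normalized_multinomial_eq_exp hN hm hsum ha, abs_sub_comm,
    abs_of_nonneg (sub_nonneg.mpr (exp_le_one_iff.mpr hnonpos))]
  linarith [add_one_le_exp (stirlingRemainder N - ∑ k, stirlingRemainder (a k)),
    stirlingRemainder_nonneg hN, sum_stirlingRemainder_le ha0 ha]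

/-- Uniform Stirling approximation of the multinomial coefficient on a
compact subset `K` of the interior of the simplex `Δ`: there are `C > 0` and `N₀` such
that for all `N ≥ N₀` and all `m ∈ K` with all `N m_k ∈ ℕ`,
`|(N!/∏_k (N m_k)!) · √((2πN)^{q−1} ∏_k m_k) · exp(−N ent(m)) − 1| ≤ C/N`.
The natural number `N m_k` is extracted as `⌊N m_k⌋₊` (exact under the hypothesis). -/
theorem stmt_11
    (q : ℕ) (hq : 2 ≤ q)
    (K : Set (Fin q → ℝ)) (hKcompact : IsCompact K)
    (hKΔ : ∀ m ∈ K, (∀ k, 0 ≤ m k) ∧ ∑ k, m k = 1)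
    (hKint : ∀ m ∈ K, ∀ k, 0 < m k)
    (ent : (Fin q → ℝ) → ℝ)
    (hent : ∀ m, ent m = -∑ k, m k * Real.log (m k)) :
    ∃ C > (0 : ℝ), ∃ N₀ : ℕ, ∀ N ≥ N₀, ∀ m ∈ K,
      (∀ k, ∃ a : ℕ, (N : ℝ) * m k = a) →
      |((N.factorial : ℝ) / ∏ k, ((Nat.floor ((N : ℝ) * m k)).factorial : ℝ)) *
          Real.sqrt ((2 * Real.pi * N) ^ (q - 1) * ∏ k, m k) *
          Real.exp (-(N : ℝ) * ent m) - 1| ≤ C / N := by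
  obtain ⟨S, hS, hbound⟩ := exists_pos_forall_sum_inv_le hKcompact hKint
  refine ⟨S / 12, by positivity, 1, fun N hN m hm hint => ?_⟩
  have hent' : ent m = ∑ k, negMulLog (m k) := by
    simp only [hent, negMulLog, neg_mul, Finset.sum_neg_distrib]
  have h := stmt_11_general (Nat.one_le_iff_ne_zero.mp hN) (hKint m hm) (hKΔ m hm).2 hint
  rw [Fintype.card_fin, ← hent'] at h
  grw [h, hbound m hm, div_div]
end
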